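/- arXiv:1310.6056 — 2 statements merged into one kernel-verified Lean document; each statement's English description precedes it below -/
import Mathlib

section
/- Let n be an even positive integer, let Q(x) = ∑_{1≤i≤j≤n} a_{ij} x_i x_j (a_{ij} ∈ ℤ) be a positive-definite integral quadratic form with coefficient matrix A_Q, discriminant D_Q, and level N_Q, and let P(x) be a spherical function of degree ν with respect to A_Q. Then for every positive integer m and every u ∈ ℤⁿ, the function f_{Q,P}^{u;m}(τ) = ∑_{x ∈ ℤⁿ, x ≡ u (mod m)} P(x) e^{2πi Q(x) τ} (τ in the upper half-plane) is a modular form of weight n/2 + ν for the group Γ₀(m²N_Q) ∩ Γ₁(m) with nebentypus the Kronecker symbol (D_Q/·); that is, f is holomorphic on the upper half-plane, satisfies f((aτ+b)/(cτ+d)) = (D_Q/d) (cτ+d)^{n/2+ν} f(τ) for all (a b; c d) ∈ Γ₀(m²N_Q) ∩ Γ₁(m), and is holomorphic at all cusps. Moreover, if ν ≥ 1, then f vanishes at all cusps, i.e., it is a cusp form. -/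
open Matrix UpperHalfPlane Complex Filter CongruenceSubgroup
open scoped MatrixGroups Manifold

/-- The factor of the Kronecker symbol `(a/b)` at the prime `2`. -/
def kronTwo (a : ℤ) : ℤ :=
  if 2 ∣ a then 0 else if a % 8 = 1 ∨ a % 8 = 7 then 1 else -1

/-- The Kronecker symbol `(a/b)`: completely multiplicative in `b`, with
`(a / 0) = 1` iff `a = ±1`, sign factor at `-1`, `kronTwo` at `2`, and the Jacobi
(= product of Legendre) symbol on the odd part of `b`. -/
noncomputable def kronecker (a b : ℤ) : ℤ :=
  if b = 0 then (if a = 1 ∨ a = -1 then 1 else 0)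
  else
    (if b < 0 ∧ a < 0 then -1 else 1) *
      kronTwo a ^ padicValNat 2 b.natAbs *
      jacobiSym a (b.natAbs / 2 ^ padicValNat 2 b.natAbs)

/-- The linear form `x ↦ ᵗl A x`. -/
noncomputable def sphericalLin {n : ℕ} (A : Matrix (Fin n) (Fin n) ℤ) (l : Fin n → ℂ) (x : Fin n → ℤ) : ℂ :=
  ∑ i, ∑ j, l i * (A i j : ℂ) * (x j : ℂ)

/-- A spherical function of degree `ν` with respect to `A`: a constant if `ν = 0`;
`x ↦ ᵗl A x` with `l ∈ ℂⁿ` if `ν = 1`; a finite linear combination of `x ↦ (ᵗl A x)^ν`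
with `ᵗl A l = 0` if `ν > 1`. -/
def IsSpherical {n : ℕ} (A : Matrix (Fin n) (Fin n) ℤ) (ν : ℕ) (P : (Fin n → ℤ) → ℂ) : Prop :=
  (ν = 0 ∧ ∃ c : ℂ, P = fun _ => c) ∨
  (ν = 1 ∧ ∃ l : Fin n → ℂ, P = fun x => sphericalLin A l x) ∨
  (1 < ν ∧ ∃ (k : ℕ) (c : Fin k → ℂ) (l : Fin k → Fin n → ℂ),
      (∀ t, ∑ i, ∑ j, l t i * (A i j : ℂ) * l t j = 0) ∧
      P = fun x => ∑ t, c t * sphericalLin A (l t) x ^ ν)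

open scoped Real

section SchurComplement

variable {K : Type*} [Field K] {n : ℕ}

/-- The first row of a matrix, without its first entry. -/
def firstRow (M : Matrix (Fin (n + 1)) (Fin (n + 1)) K) : Fin n → K := fun j => M 0 j.succ

/-- The lower right block of a matrix. -/
def lowerBlock (M : Matrix (Fin (n + 1)) (Fin (n + 1)) K) : Matrix (Fin n) (Fin n) K :=
  M.submatrix Fin.succ Fin.succ

/-- The Schur complement of the upper left entry. -/
def schur (M : Matrix (Fin (n + 1)) (Fin (n + 1)) K) : Matrix (Fin n) (Fin n) K :=
  lowerBlock M - (M 0 0)⁻¹ • vecMulVec (firstRow M) (firstRow M)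

theorem form_cons (M : Matrix (Fin (n + 1)) (Fin (n + 1)) K) (hM : M.IsSymm)
    (x : K) (z : Fin n → K) :
    (Fin.cons x z : Fin (n + 1) → K) ⬝ᵥ M *ᵥ Fin.cons x z =
      M 0 0 * x ^ 2 + 2 * x * (firstRow M ⬝ᵥ z) + z ⬝ᵥ lowerBlock M *ᵥ z := by
  have h : ∀ i : Fin n, M i.succ 0 = M 0 i.succ := fun i => hM.apply _ _
  simp only [dotProduct, mulVec, Fin.sum_univ_succ, Fin.cons_zero, Fin.cons_succ, h, firstRow,
    lowerBlock, submatrix_apply, mul_add, Finset.sum_add_distrib, Finset.mul_sum]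
  have e : ∑ i : Fin n, z i * (M 0 i.succ * x) = ∑ i : Fin n, x * (M 0 i.succ * z i) :=
    Finset.sum_congr rfl fun i _ => by ring
  have e2 : ∑ i : Fin n, 2 * x * (M 0 i.succ * z i) =
      ∑ i : Fin n, x * (M 0 i.succ * z i) + ∑ i : Fin n, x * (M 0 i.succ * z i) := by
    rw [← Finset.sum_add_distrib]
    exact Finset.sum_congr rfl fun i _ => by ring
  rw [e, e2]
  ring

theorem form_schur (M : Matrix (Fin (n + 1)) (Fin (n + 1)) K) (z : Fin n → K) :
    z ⬝ᵥ schur M *ᵥ z = z ⬝ᵥ lowerBlock M *ᵥ z - (M 0 0)⁻¹ * (firstRow M ⬝ᵥ z) ^ 2 := by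
  simp only [schur, sub_mulVec, smul_mulVec, vecMulVec_mulVec, dotProduct_sub, dotProduct_smul,
    smul_eq_mul, MulOpposite.smul_eq_mul_unop, MulOpposite.unop_op]
  rw [dotProduct_comm z (firstRow M)]
  ring

theorem form_eq_schur (M : Matrix (Fin (n + 1)) (Fin (n + 1)) K) (hM : M.IsSymm)
    (h0 : M 0 0 ≠ 0) (x : K) (z : Fin n → K) :
    (Fin.cons x z : Fin (n + 1) → K) ⬝ᵥ M *ᵥ Fin.cons x z =
      M 0 0 * (x + (firstRow M ⬝ᵥ z) / M 0 0) ^ 2 + z ⬝ᵥ schur M *ᵥ z := by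
  rw [form_cons M hM, form_schur]
  field_simp
  ring

theorem schur_isSymm (M : Matrix (Fin (n + 1)) (Fin (n + 1)) K) (hM : M.IsSymm) :
    (schur M).IsSymm := by
  ext i j
  simp [schur, lowerBlock, vecMulVec_apply, hM.apply, mul_comm]

theorem inverse_row_zero {M N : Matrix (Fin (n + 1)) (Fin (n + 1)) K} (h0 : M 0 0 ≠ 0)
    (hMN : M * N = 1) (j : Fin n) :
    N 0 j.succ = -(M 0 0)⁻¹ * ∑ k, firstRow M k * lowerBlock N k j := by
  have h := congrFun (congrFun hMN 0) j.succ
  rw [Matrix.mul_apply, Fin.sum_univ_succ, Matrix.one_apply_ne (Fin.succ_ne_zero j).symm] at h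
  simp only [firstRow, lowerBlock, submatrix_apply]
  field_simp
  linear_combination h

theorem inverse_zero_zero {M N : Matrix (Fin (n + 1)) (Fin (n + 1)) K} (h0 : M 0 0 ≠ 0)
    (hN : N.IsSymm) (hMN : M * N = 1) :
    N 0 0 = (M 0 0)⁻¹ + ((M 0 0)⁻¹) ^ 2 * (firstRow M ⬝ᵥ lowerBlock N *ᵥ firstRow M) := by
  have h := congrFun (congrFun hMN 0) 0
  rw [Matrix.mul_apply, Fin.sum_univ_succ, Matrix.one_apply_eq] at h
  have e : ∑ i : Fin n, M 0 i.succ * N i.succ 0 =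
      -(M 0 0)⁻¹ * (firstRow M ⬝ᵥ lowerBlock N *ᵥ firstRow M) := by
    simp only [dotProduct, mulVec, Finset.mul_sum]
    refine Finset.sum_congr rfl fun i _ => ?_
    rw [hN.apply 0 i.succ, inverse_row_zero h0 hMN, Finset.mul_sum, Finset.mul_sum]
    refine Finset.sum_congr rfl fun j _ => ?_
    have : lowerBlock N j i = lowerBlock N i j := hN.apply _ _
    rw [this, firstRow]
    simp only [firstRow]
    ring
  rw [e] at h
  field_simp
  field_simp at h
  linear_combination h

theorem schur_mul_lowerBlock {M N : Matrix (Fin (n + 1)) (Fin (n + 1)) K} (hM : M.IsSymm)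
    (h0 : M 0 0 ≠ 0) (hMN : M * N = 1) : schur M * lowerBlock N = 1 := by
  ext i j
  have h := congrFun (congrFun hMN i.succ) j.succ
  rw [Matrix.mul_apply, Fin.sum_univ_succ, inverse_row_zero h0 hMN, hM.apply 0 i.succ] at h
  have e : (1 : Matrix (Fin (n + 1)) (Fin (n + 1)) K) i.succ j.succ =
      (1 : Matrix (Fin n) (Fin n) K) i j := by
    simp [Matrix.one_apply]
  rw [← e, ← h, schur, Matrix.sub_mul, Matrix.smul_mul, Matrix.sub_apply, Matrix.smul_apply,
    vecMulVec_mul, vecMulVec_apply, Matrix.mul_apply]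
  simp only [vecMul, dotProduct, lowerBlock, submatrix_apply, smul_eq_mul, firstRow]
  ring

theorem form_inverse_cons {M N : Matrix (Fin (n + 1)) (Fin (n + 1)) K} (h0 : M 0 0 ≠ 0)
    (hN : N.IsSymm) (hMN : M * N = 1) (y : K) (z : Fin n → K) :
    (Fin.cons y z : Fin (n + 1) → K) ⬝ᵥ N *ᵥ Fin.cons y z =
      (M 0 0)⁻¹ * y ^ 2 +
        (z - (y / M 0 0) • firstRow M) ⬝ᵥ lowerBlock N *ᵥ (z - (y / M 0 0) • firstRow M) := by
  have hs : (lowerBlock N).IsSymm := by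
    ext i j
    simp [lowerBlock, hN.apply]
  have hrow : firstRow N ⬝ᵥ z = -(M 0 0)⁻¹ * (firstRow M ⬝ᵥ lowerBlock N *ᵥ z) := by
    rw [dotProduct_mulVec]
    simp only [dotProduct, vecMul, Finset.mul_sum, Finset.sum_mul]
    refine Finset.sum_congr rfl fun j _ => ?_
    rw [firstRow, inverse_row_zero h0 hMN, Finset.mul_sum, Finset.sum_mul]
    exact Finset.sum_congr rfl fun i _ => by ring
  have hcomm : z ⬝ᵥ lowerBlock N *ᵥ firstRow M = firstRow M ⬝ᵥ lowerBlock N *ᵥ z := by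
    rw [dotProduct_comm, dotProduct_mulVec, ← mulVec_transpose, hs, dotProduct_comm,
      dotProduct_mulVec, ← mulVec_transpose, hs, dotProduct_comm]
  rw [form_cons N hN, hrow, inverse_zero_zero h0 hN hMN]
  simp only [mulVec_sub, sub_dotProduct, dotProduct_sub, mulVec_smul, dotProduct_smul,
    smul_dotProduct, smul_eq_mul, hcomm]
  field_simp
  ring

end SchurComplement

section GaussianSums

variable {n : ℕ}

theorem summable_exp_quadratic_int (s : ℂ) (hs : 0 < s.re) (L c : ℂ) :
    Summable fun k : ℤ => cexp (-π * s * (k : ℂ) ^ 2 + L * k + c) := by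
  have h := (summable_jacobiTheta₂_term_iff (L / (2 * π * Complex.I)) (Complex.I * s)).2
    (by simpa using hs)
  refine (h.mul_right (cexp c)).congr fun k => ?_
  rw [jacobiTheta₂_term, ← Complex.exp_add]
  congr 1
  have : (π : ℂ) ≠ 0 := by exact_mod_cast Real.pi_ne_zero
  field_simp
  linear_combination (π * (k : ℂ) ^ 2 * s : ℂ) * Complex.I_sq

theorem summable_real_exp_quadratic_int {δ : ℝ} (hδ : 0 < δ) (K : ℝ) :
    Summable fun k : ℤ => Real.exp (-δ * (k : ℝ) ^ 2 + K * |(k : ℝ)|) := by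
  have h : ∀ L : ℝ, Summable fun k : ℤ => Real.exp (-δ * (k : ℝ) ^ 2 + L * k) := fun L => by
    have h1 := (summable_exp_quadratic_int (δ / π : ℝ) (by
      rw [ofReal_re]; exact div_pos hδ Real.pi_pos) L 0).norm
    refine h1.congr fun k => ?_
    rw [Complex.norm_exp]
    congr 1
    have e : -π * ((δ / π : ℝ) : ℂ) * (k : ℂ) ^ 2 + L * k + 0 =
        ((-δ * (k : ℝ) ^ 2 + L * k : ℝ) : ℂ) := by
      have : (π : ℂ) ≠ 0 := by exact_mod_cast Real.pi_ne_zero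
      push_cast
      field_simp
      ring
    rw [e, ofReal_re]
  refine Summable.of_nonneg_of_le (fun k => (Real.exp_pos _).le) (fun k => ?_) ((h K).add (h (-K)))
  rcases abs_choice (k : ℝ) with hk | hk <;> rw [hk]
  · exact le_add_of_nonneg_right (Real.exp_pos _).le
  · rw [show K * -(k : ℝ) = -K * k by ring]
    exact le_add_of_nonneg_left (Real.exp_pos _).le

theorem summable_pi_prod : ∀ {n : ℕ} (f : Fin n → ℤ → ℝ), (∀ i k, 0 ≤ f i k) →
    (∀ i, Summable (f i)) → Summable fun x : Fin n → ℤ => ∏ i, f i (x i)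
  | 0, _, _, _ => (hasSum_fintype _).summable
  | n + 1, f, h0, hf => by
    rw [← (Fin.consEquiv fun _ : Fin (n + 1) => ℤ).summable_iff]
    have ih := summable_pi_prod (fun i => f i.succ) (fun i => h0 i.succ) (fun i => hf i.succ)
    refine ((hf 0).mul_of_nonneg ih (h0 0) fun x => Finset.prod_nonneg fun i _ => h0 _ _).congr
      fun p => ?_
    simp [Fin.prod_univ_succ, Fin.consEquiv]

/-- A real quadratic form is positive definite. -/
def FormPos (M : Matrix (Fin n) (Fin n) ℝ) : Prop := ∀ x : Fin n → ℝ, x ≠ 0 → 0 < x ⬝ᵥ M *ᵥ x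

theorem FormPos.exists_coercive {M : Matrix (Fin n) (Fin n) ℝ} (hM : FormPos M) :
    ∃ ε > 0, ∀ x : Fin n → ℝ, ε * ∑ i, x i ^ 2 ≤ x ⬝ᵥ M *ᵥ x := by
  have hcont : Continuous fun x : Fin n → ℝ => x ⬝ᵥ M *ᵥ x := by
    simp only [dotProduct, mulVec]
    fun_prop
  have hcont2 : Continuous fun x : Fin n → ℝ => ∑ i, x i ^ 2 := by fun_prop
  let S : Set (Fin n → ℝ) := {x | ∑ i, x i ^ 2 = 1}
  have hS : IsCompact S := by
    refine Metric.isCompact_of_isClosed_isBounded (isClosed_eq hcont2 continuous_const) ?_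
    refine (Metric.isBounded_closedBall (x := (0 : Fin n → ℝ)) (r := 1)).subset fun x hx => ?_
    rw [mem_closedBall_zero_iff, pi_norm_le_iff_of_nonneg zero_le_one]
    intro i
    have h1 : x i ^ 2 ≤ 1 := by
      rw [← (hx : ∑ i, x i ^ 2 = 1)]
      exact Finset.single_le_sum (fun j _ => sq_nonneg (x j)) (Finset.mem_univ i)
    rw [Real.norm_eq_abs]
    exact (sq_le_one_iff_abs_le_one _).1 h1
  obtain ⟨ε, hε, hbound⟩ : ∃ ε > 0, ∀ x ∈ S, ε ≤ x ⬝ᵥ M *ᵥ x := by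
    rcases S.eq_empty_or_nonempty with he | hne
    · exact ⟨1, one_pos, by simp [he]⟩
    · obtain ⟨x₀, hx₀, hmin⟩ := hS.exists_isMinOn hne hcont.continuousOn
      refine ⟨_, hM x₀ ?_, fun x hx => hmin hx⟩
      rintro rfl
      simp [S] at hx₀
  refine ⟨ε, hε, fun x => ?_⟩
  by_cases hx : x = 0
  · simp [hx]
  have hr : 0 < ∑ i, x i ^ 2 := by
    obtain ⟨i, hi⟩ := Function.ne_iff.1 hx
    exact Finset.sum_pos' (fun j _ => sq_nonneg _)
      ⟨i, Finset.mem_univ i, by have : x i ≠ 0 := hi; positivity⟩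
  set r := √(∑ i, x i ^ 2) with hrdef
  have hr2 : r ^ 2 = ∑ i, x i ^ 2 := Real.sq_sqrt hr.le
  have hrpos : 0 < r := Real.sqrt_pos.2 hr
  have h := hbound (r⁻¹ • x) (by
    simp only [S, Set.mem_ofPred_eq, Pi.smul_apply, smul_eq_mul, mul_pow, ← Finset.mul_sum, ← hr2]
    field_simp)
  rw [mulVec_smul, dotProduct_smul, smul_dotProduct, smul_eq_mul, smul_eq_mul] at h
  rw [← hr2]
  calc ε * r ^ 2 ≤ (r⁻¹ * (r⁻¹ * (x ⬝ᵥ M *ᵥ x))) * r ^ 2 := by gcongr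
    _ = x ⬝ᵥ M *ᵥ x := by field_simp

/-- Gaussian decay of a function on the lattice, up to exponential growth. -/
def GaussBdd (F : (Fin n → ℤ) → ℂ) : Prop :=
  ∃ δ > 0, ∃ K c : ℝ, ∀ x, ‖F x‖ ≤
    c * Real.exp (-δ * ∑ i, (x i : ℝ) ^ 2 + K * ∑ i, |(x i : ℝ)|)

theorem GaussBdd.summable_mul_exp {F : (Fin n → ℤ) → ℂ} (hF : GaussBdd F) {α : (Fin n → ℤ) → ℂ}
    {k₀ k₁ : ℝ} (hα : ∀ x, ‖α x‖ ≤ k₁ * ∑ i, |(x i : ℝ)| + k₀) {R : ℝ} (hR : 0 ≤ R) :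
    Summable fun x => ‖F x‖ * Real.exp (R * ‖α x‖) := by
  obtain ⟨δ, hδ, K, c, h⟩ := hF
  have hs := (summable_pi_prod
    (fun (_ : Fin n) k => Real.exp (-δ * (k : ℝ) ^ 2 + (K + R * k₁) * |(k : ℝ)|))
    (fun _ _ => (Real.exp_pos _).le)
    fun _ => summable_real_exp_quadratic_int hδ (K + R * k₁)).mul_left (c * Real.exp (R * k₀))
  refine Summable.of_nonneg_of_le (fun x => by positivity) (fun x => ?_) hs
  calc ‖F x‖ * Real.exp (R * ‖α x‖)
      ≤ (c * Real.exp (-δ * ∑ i, (x i : ℝ) ^ 2 + K * ∑ i, |(x i : ℝ)|)) *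
        Real.exp (R * (k₁ * ∑ i, |(x i : ℝ)| + k₀)) :=
        mul_le_mul (h x) (Real.exp_le_exp.2 (mul_le_mul_of_nonneg_left (hα x) hR))
          (Real.exp_pos _).le ((norm_nonneg _).trans (h x))
    _ = _ := by
        rw [← Real.exp_sum, Finset.sum_add_distrib, ← Finset.mul_sum, ← Finset.mul_sum, mul_assoc,
          mul_assoc, ← Real.exp_add, ← Real.exp_add]
        ring_nf

theorem GaussBdd.summable_norm_mul_pow {F : (Fin n → ℤ) → ℂ} (hF : GaussBdd F)
    {α : (Fin n → ℤ) → ℂ} {k₀ k₁ : ℝ} (hα : ∀ x, ‖α x‖ ≤ k₁ * ∑ i, |(x i : ℝ)| + k₀) (ν : ℕ) :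
    Summable fun x => ‖α x ^ ν * F x‖ := by
  refine Summable.of_nonneg_of_le (fun x => norm_nonneg _) (fun x => ?_)
    ((hF.summable_mul_exp hα zero_le_one).mul_left (ν.factorial : ℝ))
  have h := Real.pow_div_factorial_le_exp _ (norm_nonneg (α x)) ν
  rw [div_le_iff₀ (by positivity)] at h
  rw [norm_mul, norm_pow, one_mul]
  nlinarith [norm_nonneg (F x)]

theorem GaussBdd.congr {F G : (Fin n → ℤ) → ℂ} (hF : GaussBdd F) (h : ∀ x, F x = G x) :
    GaussBdd G := by
  rwa [← funext h]

theorem GaussBdd.summable {F : (Fin n → ℤ) → ℂ} (hF : GaussBdd F) : Summable F :=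
  Summable.of_norm <| by
    simpa using hF.summable_norm_mul_pow (α := 0) (k₀ := 0) (k₁ := 0) (by simp) 0

theorem norm_dotProduct_int_le (L : Fin n → ℂ) (x : Fin n → ℤ) :
    ‖L ⬝ᵥ fun i => (x i : ℂ)‖ ≤ (∑ i, ‖L i‖) * ∑ i, |(x i : ℝ)| := by
  rw [dotProduct, Finset.mul_sum]
  refine (norm_sum_le _ _).trans (Finset.sum_le_sum fun i _ => ?_)
  rw [norm_mul, Complex.norm_intCast]
  gcongr
  exact Finset.single_le_sum (f := fun i => ‖L i‖) (fun j _ => norm_nonneg _) (Finset.mem_univ i)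

theorem gaussBdd_gauss {M : Matrix (Fin n) (Fin n) ℝ} (hM : FormPos M) {s : ℂ} (hs : 0 < s.re)
    (L : Fin n → ℂ) (c : ℂ) : GaussBdd fun x : Fin n → ℤ =>
      cexp (-π * s * ((fun i => (x i : ℝ)) ⬝ᵥ M *ᵥ fun i => (x i : ℝ) : ℝ) +
        (L ⬝ᵥ fun i => (x i : ℂ)) + c) := by
  obtain ⟨ε, hε, hbound⟩ := hM.exists_coercive
  refine ⟨π * s.re * ε, mul_pos (mul_pos Real.pi_pos hs) hε, ∑ i, ‖L i‖, Real.exp c.re,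
    fun x => ?_⟩
  rw [Complex.norm_exp, ← Real.exp_add, Real.exp_le_exp]
  have h := (Complex.re_le_norm _).trans (norm_dotProduct_int_le L x)
  have e : (-π * s * (((fun i => (x i : ℝ)) ⬝ᵥ M *ᵥ fun i => (x i : ℝ) : ℝ) : ℂ)).re =
      -(π * s.re) * ((fun i => (x i : ℝ)) ⬝ᵥ M *ᵥ fun i => (x i : ℝ)) := by
    rw [Complex.re_mul_ofReal]
    simp
  rw [add_re, add_re, e]
  nlinarith [mul_le_mul_of_nonneg_left (hbound fun i => (x i : ℝ)) (mul_pos Real.pi_pos hs).le]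

/-- The complexification of a real vector. -/
def toC (w : Fin n → ℝ) : Fin n → ℂ := fun i => w i

/-- The translate of an integral vector by a complex one. -/
def shift (b : Fin n → ℂ) (x : Fin n → ℤ) : Fin n → ℂ := fun i => x i + b i

theorem toC_dotProduct (M : Matrix (Fin n) (Fin n) ℝ) (x y : Fin n → ℝ) :
    toC x ⬝ᵥ M.map ofReal *ᵥ toC y = (x ⬝ᵥ M *ᵥ y : ℝ) := by
  simp [toC, dotProduct, mulVec]

theorem symm_dotProduct {R : Type*} [CommRing R] {M : Matrix (Fin n) (Fin n) R} (hM : M.IsSymm)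
    (x y : Fin n → R) : x ⬝ᵥ M *ᵥ y = y ⬝ᵥ M *ᵥ x := by
  rw [dotProduct_mulVec, ← mulVec_transpose, hM, dotProduct_comm]

theorem form_add {R : Type*} [CommRing R] {M : Matrix (Fin n) (Fin n) R} (hM : M.IsSymm)
    (x y : Fin n → R) : (x + y) ⬝ᵥ M *ᵥ (x + y) =
      x ⬝ᵥ M *ᵥ x + 2 * (y ⬝ᵥ M *ᵥ x) + y ⬝ᵥ M *ᵥ y := by
  simp only [mulVec_add, add_dotProduct, dotProduct_add]
  rw [symm_dotProduct hM x y]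
  ring

/-- One term of the theta series at a complex translate with a real character. -/
noncomputable def gaussTerm (M : Matrix (Fin n) (Fin n) ℝ) (t : ℂ) (b : Fin n → ℂ) (w : Fin n → ℝ)
    (x : Fin n → ℤ) : ℂ :=
  cexp (-π * t * (shift b x ⬝ᵥ M.map ofReal *ᵥ shift b x) +
    2 * π * Complex.I * (toC w ⬝ᵥ shift b x))

/-- One term of the dual theta series. -/
noncomputable def dualTerm (N : Matrix (Fin n) (Fin n) ℝ) (t : ℂ) (b : Fin n → ℂ) (w : Fin n → ℝ)
    (y : Fin n → ℤ) : ℂ :=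
  cexp (-π / t * ((fun i => (y i : ℝ) - w i) ⬝ᵥ N *ᵥ fun i => (y i : ℝ) - w i : ℝ) +
    2 * π * Complex.I * (b ⬝ᵥ fun i => (y i : ℂ)))

theorem isSymm_map {M : Matrix (Fin n) (Fin n) ℝ} (hM : M.IsSymm) : (M.map ofReal).IsSymm := by
  ext i j
  simp [hM.apply]

theorem gaussBdd_gaussTerm {M : Matrix (Fin n) (Fin n) ℝ} (hs : M.IsSymm) (hM : FormPos M) {t : ℂ}
    (ht : 0 < t.re) (b : Fin n → ℂ) (w : Fin n → ℝ) : GaussBdd (gaussTerm M t b w) := by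
  refine (gaussBdd_gauss hM ht
    ((-2 * π * t) • (M.map ofReal *ᵥ b) + (2 * π * Complex.I) • toC w)
    (-π * t * (b ⬝ᵥ M.map ofReal *ᵥ b) + 2 * π * Complex.I * (toC w ⬝ᵥ b))).congr fun x => ?_
  have h1 : shift b x = toC (fun i => (x i : ℝ)) + b := by
    ext i; simp [shift, toC]
  have h2 : (fun i => (x i : ℂ)) = toC (fun i => (x i : ℝ)) := by
    ext i; simp [toC]
  rw [gaussTerm, h1, form_add (isSymm_map hs), toC_dotProduct, h2]
  congr 1
  simp only [add_dotProduct, smul_dotProduct, smul_eq_mul, dotProduct_add]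
  rw [dotProduct_comm (M.map ofReal *ᵥ b), symm_dotProduct (isSymm_map hs) _ b]
  ring

theorem gaussBdd_dualTerm {N : Matrix (Fin n) (Fin n) ℝ} (hs : N.IsSymm) (hN : FormPos N) {t : ℂ}
    (ht : 0 < t.re) (b : Fin n → ℂ) (w : Fin n → ℝ) : GaussBdd (dualTerm N t b w) := by
  have ht' : 0 < (1 / t).re := by
    rw [one_div, inv_re]
    have : t ≠ 0 := fun h => by simp [h] at ht
    exact div_pos ht (normSq_pos.2 this)
  refine (gaussBdd_gauss hN ht'
    ((2 * π / t) • toC (N *ᵥ w) + (2 * π * Complex.I) • b)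
    (-π / t * (w ⬝ᵥ N *ᵥ w : ℝ))).congr fun y => ?_
  have h1 : (fun i => (y i : ℝ) - w i) = (fun i => (y i : ℝ)) + -w := by
    ext i; simp [sub_eq_add_neg]
  have h2 : toC (N *ᵥ w) ⬝ᵥ (fun i => (y i : ℂ)) = (w ⬝ᵥ N *ᵥ fun i => (y i : ℝ) : ℝ) := by
    rw [symm_dotProduct hs, dotProduct_comm]
    simp [toC, dotProduct]
  rw [dualTerm, h1, form_add hs]
  congr 1
  simp only [add_dotProduct, smul_dotProduct, smul_eq_mul, h2, mulVec_neg, dotProduct_neg,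
    neg_dotProduct]
  push_cast
  ring

end GaussianSums

section PoissonSummation

variable {n : ℕ}

theorem poisson_gauss_int {t : ℂ} (ht : 0 < t.re) (b w : ℂ) :
    ∑' k : ℤ, cexp (-π * t * ((k : ℂ) + b) ^ 2 + 2 * π * Complex.I * (w * (k + b))) =
      1 / t ^ (1 / 2 : ℂ) * ∑' k : ℤ, cexp (-π / t * ((k : ℂ) - w) ^ 2 +
        2 * π * Complex.I * (b * k)) := by
  have ht0 : t ≠ 0 := fun h => by simp [h] at ht
  have h := Complex.tsum_exp_neg_quadratic ht (-t * b + Complex.I * w)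
  have e1 : ∀ k : ℤ, cexp (-π * t * ((k : ℂ) + b) ^ 2 + 2 * π * Complex.I * (w * (k + b))) =
      cexp (-π * t * b ^ 2 + 2 * π * Complex.I * w * b) *
        cexp (-π * t * (k : ℂ) ^ 2 + 2 * π * (-t * b + Complex.I * w) * k) := fun k => by
    rw [← Complex.exp_add]
    congr 1
    ring
  have e2 : ∀ k : ℤ, cexp (-π / t * ((k : ℂ) - w) ^ 2 + 2 * π * Complex.I * (b * k)) =
      cexp (-π * t * b ^ 2 + 2 * π * Complex.I * w * b) *
        cexp (-π / t * ((k : ℂ) + Complex.I * (-t * b + Complex.I * w)) ^ 2) := fun k => by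
    rw [← Complex.exp_add]
    congr 1
    have : (k : ℂ) + Complex.I * (-t * b + Complex.I * w) = k - w - Complex.I * t * b := by
      linear_combination w * Complex.I_sq
    rw [this]
    field_simp
    linear_combination (t ^ 2 * b ^ 2 : ℂ) * Complex.I_sq
  simp only [e1, e2, tsum_mul_left]
  rw [h]
  ring

theorem schur_map (M : Matrix (Fin (n + 1)) (Fin (n + 1)) ℝ) :
    schur (M.map ofReal) = (schur M).map ofReal := by
  ext i j
  simp [schur, lowerBlock, firstRow, vecMulVec_apply]

theorem firstRow_map (M : Matrix (Fin (n + 1)) (Fin (n + 1)) ℝ) :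
    firstRow (M.map ofReal) = toC (firstRow M) := by
  ext i
  simp [firstRow, toC]

theorem FormPos.zero_zero_pos {M : Matrix (Fin (n + 1)) (Fin (n + 1)) ℝ} (hM : FormPos M) :
    0 < M 0 0 := by
  have h := hM (Pi.single 0 1) (by simp)
  simpa using h

theorem FormPos.schur {M : Matrix (Fin (n + 1)) (Fin (n + 1)) ℝ} (hs : M.IsSymm)
    (hM : FormPos M) : FormPos (schur M) := by
  intro x hx
  have h := hM (Fin.cons (-(firstRow M ⬝ᵥ x) / M 0 0) x) (fun h => hx (by
    ext i
    simpa using congrFun h i.succ))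
  rw [form_eq_schur M hs hM.zero_zero_pos.ne'] at h
  simpa [neg_div] using h

theorem FormPos.inverse {M N : Matrix (Fin n) (Fin n) ℝ} (hM : FormPos M)
    (hMN : M * N = 1) : FormPos N := by
  intro y hy
  have e : M *ᵥ (N *ᵥ y) = y := by rw [mulVec_mulVec, hMN, one_mulVec]
  have h := hM (N *ᵥ y) (fun h => hy (by rw [← e, h, mulVec_zero]))
  rwa [e, dotProduct_comm] at h

theorem re_mul_ofReal_pos {t : ℂ} (ht : 0 < t.re) {a : ℝ} (ha : 0 < a) : 0 < (t * a).re := by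
  rw [Complex.re_mul_ofReal]
  exact mul_pos ht ha

theorem cpow_half_mul_ofReal {t : ℂ} (ht : 0 < t.re) {a : ℝ} (ha : 0 < a) :
    (t * a) ^ (1 / 2 : ℂ) = t ^ (1 / 2 : ℂ) * (a : ℂ) ^ (1 / 2 : ℂ) := by
  have ht0 : t ≠ 0 := fun h => by simp [h] at ht
  have ha0 : (a : ℂ) ≠ 0 := by exact_mod_cast ha.ne'
  rw [cpow_def_of_ne_zero (mul_ne_zero ht0 ha0), cpow_def_of_ne_zero ht0, cpow_def_of_ne_zero ha0,
    ← Complex.exp_add, Complex.log_mul_ofReal _ ha _ ht0, Complex.ofReal_log ha.le]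
  ring_nf

/-- The terms of the double series obtained after summing over the first coordinate. -/
noncomputable def mixedTerm (M : Matrix (Fin (n + 1)) (Fin (n + 1)) ℝ) (t : ℂ)
    (b : Fin (n + 1) → ℂ) (w : Fin (n + 1) → ℝ) (y : ℤ) (x : Fin n → ℤ) : ℂ :=
  cexp (-π / (t * M 0 0) * ((y : ℂ) - w 0) ^ 2 + 2 * π * Complex.I * (b 0 * y)) *
    gaussTerm (schur M) t (Fin.tail b) (Fin.tail w + (((y : ℝ) - w 0) / M 0 0) • firstRow M) x

theorem summable_mixedTerm {M : Matrix (Fin (n + 1)) (Fin (n + 1)) ℝ} (hs : M.IsSymm)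
    (hM : FormPos M) {t : ℂ} (ht : 0 < t.re) (b : Fin (n + 1) → ℂ) (w : Fin (n + 1) → ℝ) :
    Summable fun p : ℤ × (Fin n → ℤ) => mixedTerm M t b w p.1 p.2 := by
  have ha := hM.zero_zero_pos
  have hta := re_mul_ofReal_pos ht ha
  have hta' : 0 < (1 / (t * M 0 0)).re := by
    rw [one_div, inv_re]
    exact div_pos hta (normSq_pos.2 fun h => by simp [h] at hta)
  have h1 := (summable_exp_quadratic_int (1 / (t * M 0 0)) hta'
    (2 * π / (t * M 0 0) * w 0 + 2 * π * Complex.I *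
      (b 0 + (toC (firstRow M) ⬝ᵥ Fin.tail b) / M 0 0))
    (-π / (t * M 0 0) * w 0 ^ 2 - 2 * π * Complex.I * w 0 *
      (toC (firstRow M) ⬝ᵥ Fin.tail b) / M 0 0)).norm
  have h2 := (gaussBdd_gaussTerm (schur_isSymm M hs) (FormPos.schur hs hM) ht (Fin.tail b)
    (Fin.tail w)).summable.norm
  refine Summable.of_norm (((h1.mul_of_nonneg h2 (fun _ => norm_nonneg _)
    (fun _ => norm_nonneg _))).congr fun p => ?_)
  obtain ⟨y, x⟩ := p
  have hphase : ‖cexp ((2 * π * (((y : ℝ) - w 0) / M 0 0) *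
      (firstRow M ⬝ᵥ fun i => (x i : ℝ)) : ℝ) * Complex.I)‖ = 1 := Complex.norm_exp_ofReal_mul_I _
  rw [mixedTerm, ← norm_mul, ← mul_one ‖_ * _‖, ← hphase, ← norm_mul]
  congr 1
  rw [gaussTerm, gaussTerm, ← Complex.exp_add, ← Complex.exp_add, ← Complex.exp_add]
  congr 1
  have e1 : toC (Fin.tail w + (((y : ℝ) - w 0) / M 0 0) • firstRow M) =
      toC (Fin.tail w) + (((y : ℂ) - w 0) / M 0 0) • toC (firstRow M) := by
    ext i
    simp [toC]
  have e2 : toC (firstRow M) ⬝ᵥ shift (Fin.tail b) x =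
      (firstRow M ⬝ᵥ fun i => (x i : ℝ) : ℝ) + toC (firstRow M) ⬝ᵥ Fin.tail b := by
    simp [toC, shift, dotProduct, mul_add, Finset.sum_add_distrib]
  rw [e1, add_dotProduct, smul_dotProduct, e2, smul_eq_mul]
  push_cast
  ring

theorem tsum_gaussTerm_first {M : Matrix (Fin (n + 1)) (Fin (n + 1)) ℝ} (hs : M.IsSymm)
    (hM : FormPos M) {t : ℂ} (ht : 0 < t.re) (b : Fin (n + 1) → ℂ) (w : Fin (n + 1) → ℝ)
    (x : Fin n → ℤ) :
    ∑' k : ℤ, gaussTerm M t b w (Fin.cons k x : Fin (n + 1) → ℤ) =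
      1 / (t * M 0 0) ^ (1 / 2 : ℂ) * ∑' y : ℤ, mixedTerm M t b w y x := by
  have ha : (M 0 0 : ℂ) ≠ 0 := by exact_mod_cast hM.zero_zero_pos.ne'
  set v := toC (firstRow M) ⬝ᵥ shift (Fin.tail b) x with hv
  set S := shift (Fin.tail b) x ⬝ᵥ (schur M).map ofReal *ᵥ shift (Fin.tail b) x with hS
  set W := toC (Fin.tail w) ⬝ᵥ shift (Fin.tail b) x with hW
  have h := poisson_gauss_int (re_mul_ofReal_pos ht hM.zero_zero_pos) (b 0 + v / M 0 0) (w 0)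
  have e1 : ∀ k : ℤ, gaussTerm M t b w (Fin.cons k x : Fin (n + 1) → ℤ) =
      cexp (-π * t * S + 2 * π * Complex.I * (W - w 0 * v / M 0 0)) *
        cexp (-π * (t * M 0 0) * ((k : ℂ) + (b 0 + v / M 0 0)) ^ 2 +
          2 * π * Complex.I * (w 0 * (k + (b 0 + v / M 0 0)))) := fun k => by
    have hc : shift b (Fin.cons k x : Fin (n + 1) → ℤ) =
        Fin.cons ((k : ℂ) + b 0) (shift (Fin.tail b) x) := by
      ext i
      refine Fin.cases ?_ (fun i => ?_) i <;> simp [shift, Fin.tail]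
    have hw : toC w ⬝ᵥ (Fin.cons ((k : ℂ) + b 0) (shift (Fin.tail b) x) : Fin (n + 1) → ℂ) =
        w 0 * (k + b 0) + W := by
      simp [hW, dotProduct, Fin.sum_univ_succ, toC, Fin.tail]
    rw [gaussTerm, hc, hw, form_eq_schur _ (isSymm_map hs) (by simpa using ha), schur_map,
      firstRow_map, map_apply, ← hv, ← hS, ← Complex.exp_add]
    congr 1
    ring
  have e2 : ∀ y : ℤ, mixedTerm M t b w y x =
      cexp (-π * t * S + 2 * π * Complex.I * (W - w 0 * v / M 0 0)) *
        cexp (-π / (t * M 0 0) * ((y : ℂ) - w 0) ^ 2 +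
        2 * π * Complex.I * ((b 0 + v / M 0 0) * y)) := fun y => by
    have e3 : toC (Fin.tail w + (((y : ℝ) - w 0) / M 0 0) • firstRow M) =
        toC (Fin.tail w) + (((y : ℂ) - w 0) / M 0 0) • toC (firstRow M) := by
      ext i
      simp [toC]
    rw [mixedTerm, gaussTerm, e3, add_dotProduct, smul_dotProduct, ← hv, ← hS, ← hW, smul_eq_mul,
      ← Complex.exp_add, ← Complex.exp_add]
    congr 1
    ring
  simp only [e1, e2, tsum_mul_left]
  rw [h]
  ring

theorem dualTerm_cons {M N : Matrix (Fin (n + 1)) (Fin (n + 1)) ℝ} (h0 : M 0 0 ≠ 0)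
    (hN : N.IsSymm) (hMN : M * N = 1) (t : ℂ) (b : Fin (n + 1) → ℂ)
    (w : Fin (n + 1) → ℝ) (k : ℤ) (y : Fin n → ℤ) :
    dualTerm N t b w (Fin.cons k y : Fin (n + 1) → ℤ) =
      cexp (-π / (t * M 0 0) * ((k : ℂ) - w 0) ^ 2 + 2 * π * Complex.I * (b 0 * k)) *
      dualTerm (lowerBlock N) t (Fin.tail b)
        (Fin.tail w + (((k : ℝ) - w 0) / M 0 0) • firstRow M) y := by
  have e1 : (fun i => ((Fin.cons k y : Fin (n + 1) → ℤ) i : ℝ) - w i) =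
      Fin.cons ((k : ℝ) - w 0) (fun i => (y i : ℝ) - Fin.tail w i) := by
    ext i
    refine Fin.cases ?_ (fun i => ?_) i <;> simp [Fin.tail]
  have e2 : (fun i => (y i : ℝ) - (Fin.tail w + (((k : ℝ) - w 0) / M 0 0) • firstRow M) i) =
      (fun i => (y i : ℝ) - Fin.tail w i) - (((k : ℝ) - w 0) / M 0 0) • firstRow M := by
    ext i
    simp only [Pi.add_apply, Pi.sub_apply]
    ring
  have e3 : (b ⬝ᵥ fun i => ((Fin.cons k y : Fin (n + 1) → ℤ) i : ℂ)) =
      b 0 * k + Fin.tail b ⬝ᵥ fun i => (y i : ℂ) := by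
    simp [dotProduct, Fin.sum_univ_succ, Fin.tail]
  rw [dualTerm, dualTerm, e1, e2, e3, form_inverse_cons h0 hN hMN, ← Complex.exp_add]
  congr 1
  push_cast
  field_simp
  ring

/-- **Poisson summation** for Gaussians with complex translates. The constant depends on the
quadratic form only. -/
theorem poisson_gauss : ∀ {n : ℕ} {M N : Matrix (Fin n) (Fin n) ℝ}, M.IsSymm → N.IsSymm →
    FormPos M → M * N = 1 → ∃ C : ℂ, ∀ t : ℂ, 0 < t.re → ∀ (b : Fin n → ℂ) (w : Fin n → ℝ),
      ∑' x, gaussTerm M t b w x = C * (1 / t ^ (1 / 2 : ℂ)) ^ n * ∑' y, dualTerm N t b w y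
  | 0, M, N, _, _, _, _ => ⟨1, fun t _ b w => by simp [gaussTerm, dualTerm]⟩
  | n + 1, M, N, hM, hN, hpos, hMN => by
    have ha := hpos.zero_zero_pos
    have hN' : (lowerBlock N).IsSymm := by
      ext i j
      simp [lowerBlock, hN.apply]
    obtain ⟨C, hC⟩ := poisson_gauss (schur_isSymm M hM) hN' (FormPos.schur hM hpos)
      (schur_mul_lowerBlock hM ha.ne' hMN)
    refine ⟨C * (1 / (M 0 0 : ℂ) ^ (1 / 2 : ℂ)), fun t ht b w => ?_⟩
    have hsum := (gaussBdd_gaussTerm hM hpos ht b w).summable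
    have hdual := (gaussBdd_dualTerm hN (hpos.inverse hMN) ht b w).summable
    have hsum' : Summable fun p : ℤ × (Fin n → ℤ) =>
        gaussTerm M t b w (Fin.cons p.1 p.2 : Fin (n + 1) → ℤ) :=
      (Fin.consEquiv fun _ : Fin (n + 1) => ℤ).summable_iff.2 hsum
    have hdual' : Summable fun p : ℤ × (Fin n → ℤ) =>
        dualTerm N t b w (Fin.cons p.1 p.2 : Fin (n + 1) → ℤ) :=
      (Fin.consEquiv fun _ : Fin (n + 1) => ℤ).summable_iff.2 hdual
    have esum : ∀ F : (Fin (n + 1) → ℤ) → ℂ, ∑' x, F x =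
        ∑' p : ℤ × (Fin n → ℤ), F (Fin.cons p.1 p.2 : Fin (n + 1) → ℤ) := fun F =>
      ((Fin.consEquiv fun _ : Fin (n + 1) => ℤ).tsum_eq F).symm
    rw [esum, esum]
    have hmix := summable_mixedTerm hM hpos ht b w
    calc ∑' p : ℤ × (Fin n → ℤ), gaussTerm M t b w (Fin.cons p.1 p.2 : Fin (n + 1) → ℤ)
        = ∑' x : Fin n → ℤ, ∑' k : ℤ, gaussTerm M t b w (Fin.cons k x : Fin (n + 1) → ℤ) := by
          rw [hsum'.tsum_prod, Summable.tsum_comm (f := fun (x : Fin n → ℤ) (k : ℤ) =>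
            gaussTerm M t b w (Fin.cons k x : Fin (n + 1) → ℤ)) hsum'.prod_symm]
      _ = 1 / (t * M 0 0) ^ (1 / 2 : ℂ) * ∑' x : Fin n → ℤ, ∑' y : ℤ, mixedTerm M t b w y x := by
          simp only [tsum_gaussTerm_first hM hpos ht, tsum_mul_left]
      _ = 1 / (t * M 0 0) ^ (1 / 2 : ℂ) * ∑' y : ℤ, ∑' x : Fin n → ℤ, mixedTerm M t b w y x := by
          rw [Summable.tsum_comm (f := mixedTerm M t b w) hmix]
      _ = 1 / (t * M 0 0) ^ (1 / 2 : ℂ) * (C * (1 / t ^ (1 / 2 : ℂ)) ^ n *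
            ∑' k : ℤ, ∑' y : Fin n → ℤ, dualTerm N t b w (Fin.cons k y : Fin (n + 1) → ℤ)) := by
          simp only [mixedTerm, tsum_mul_left, hC t ht, dualTerm_cons ha.ne' hN hMN]
          rw [← tsum_mul_left, ← tsum_mul_left, ← tsum_mul_left]
          exact tsum_congr fun k => by ring
      _ = _ := by
          rw [hdual'.tsum_prod, cpow_half_mul_ofReal ht ha, pow_succ]
          ring

end PoissonSummation

section SphericalPoisson

variable {n : ℕ}

theorem hasSum_tsum_mul_exp {X : Type*} {c α : X → ℂ} {s : ℂ}
    (h : Summable fun x => ‖c x‖ * Real.exp (‖s‖ * ‖α x‖)) :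
    HasSum (fun ν : ℕ => s ^ ν * ∑' x, c x * α x ^ ν / ν.factorial)
      (∑' x, c x * cexp (s * α x)) := by
  have hr : ∀ x, HasSum (fun ν : ℕ => ‖c x‖ * ((‖s‖ * ‖α x‖) ^ ν / ν.factorial))
      (‖c x‖ * Real.exp (‖s‖ * ‖α x‖)) := fun x => by
    rw [Real.exp_eq_exp_ℝ]
    exact (NormedSpace.expSeries_div_hasSum_exp (‖s‖ * ‖α x‖)).mul_left _
  have hnorm : ∀ x (ν : ℕ), ‖c x * ((s * α x) ^ ν / ν.factorial)‖ =
      ‖c x‖ * ((‖s‖ * ‖α x‖) ^ ν / ν.factorial) := fun x ν => by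
    simp
  have hsum : Summable fun p : X × ℕ => c p.1 * ((s * α p.1) ^ p.2 / p.2.factorial) := by
    refine Summable.of_norm ((summable_prod_of_nonneg fun p => norm_nonneg _).2 ⟨fun x => ?_, ?_⟩)
    · simp only [hnorm]; exact (hr x).summable
    · simp only [hnorm, (hr _).tsum_eq]; exact h
  have hx : ∀ x, HasSum (fun ν : ℕ => c x * ((s * α x) ^ ν / ν.factorial))
      (c x * cexp (s * α x)) := fun x => by
    rw [Complex.exp_eq_exp_ℂ]
    exact (NormedSpace.expSeries_div_hasSum_exp (s * α x)).mul_left _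
  have htot : ∑' p : X × ℕ, c p.1 * ((s * α p.1) ^ p.2 / p.2.factorial) =
      ∑' x, c x * cexp (s * α x) := by
    rw [hsum.tsum_prod]
    exact tsum_congr fun x => (hx x).tsum_eq
  rw [← htot]
  have hs2 : HasSum (fun p : ℕ × X => c p.2 * ((s * α p.2) ^ p.1 / p.1.factorial))
      (∑' p : X × ℕ, c p.1 * ((s * α p.1) ^ p.2 / p.2.factorial)) :=
    (Equiv.prodComm ℕ X).hasSum_iff.2 hsum.hasSum
  convert hs2.prod_fiberwise fun ν => (hs2.summable.prod_factor ν).hasSum using 2 with ν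
  rw [← tsum_mul_left]
  exact tsum_congr fun x => by rw [mul_pow]; ring

theorem coeff_eq_of_gaussian_twist {a b : ℕ → ℂ} {G H : ℂ → ℂ} {κ : ℂ}
    (hG : ∀ s, HasSum (fun ν : ℕ => s ^ ν * a ν) (G s))
    (hH : ∀ s, HasSum (fun ν : ℕ => s ^ ν * b ν) (H s))
    (h : ∀ s, H s = cexp (κ * s ^ 2) * G s) {ν : ℕ} (hν : ν ≤ 1 ∨ κ = 0) : b ν = a ν := by
  have key : ∀ {a : ℕ → ℂ} {G : ℂ → ℂ}, (∀ s, HasSum (fun ν : ℕ => s ^ ν * a ν) (G s)) →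
      HasFPowerSeriesAt G (FormalMultilinearSeries.ofScalars ℂ a) 0 := fun {a G} h => by
    rw [hasFPowerSeriesAt_iff]
    refine Eventually.of_forall fun z => ?_
    simpa [FormalMultilinearSeries.coeff_ofScalars] using h z
  have pG := key hG
  have pH := key hH
  rcases hν with hν | rfl
  · interval_cases ν
    · have e1 := (hG 0).unique (hasSum_single 0 fun k hk => by simp [hk])
      have e2 := (hH 0).unique (hasSum_single 0 fun k hk => by simp [hk])
      have := h 0
      simp_all
    · have dG := pG.hasDerivAt
      have dH := pH.hasDerivAt
      have hE : HasDerivAt (fun s : ℂ => cexp (κ * s ^ 2)) 0 0 := by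
        have := (((hasDerivAt_id (0 : ℂ)).pow 2).const_mul κ).cexp
        simpa using this
      have d2 := hE.mul dG
      have : H = fun s => cexp (κ * s ^ 2) * G s := funext h
      rw [this] at dH
      simpa [FormalMultilinearSeries.ofScalars] using dH.unique d2
  · have : H = G := funext fun s => by simp [h s]
    subst this
    have := pG.eq_formalMultilinearSeries pH
    have := congrArg (fun p => FormalMultilinearSeries.coeff p ν) this
    simpa [FormalMultilinearSeries.coeff_ofScalars] using this.symm

theorem gaussTerm_add_smul {M : Matrix (Fin n) (Fin n) ℝ} (hM : M.IsSymm) (t : ℂ)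
    (b l : Fin n → ℂ) (s : ℂ) (x : Fin n → ℤ) :
    gaussTerm M t (b + s • l) 0 x = cexp (-π * t * (l ⬝ᵥ M.map ofReal *ᵥ l) * s ^ 2) *
      (gaussTerm M t b 0 x * cexp (s * (-2 * π * t * (l ⬝ᵥ M.map ofReal *ᵥ shift b x)))) := by
  have h1 : shift (b + s • l) x = shift b x + s • l := by
    ext i; simp [shift, add_assoc]
  have h0 : toC (0 : Fin n → ℝ) = 0 := by ext i; simp [toC]
  rw [gaussTerm, gaussTerm, ← Complex.exp_add, ← Complex.exp_add, h1, form_add (isSymm_map hM), h0]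
  congr 1
  simp only [mulVec_smul, smul_dotProduct, dotProduct_smul, smul_eq_mul, zero_dotProduct]
  ring

theorem dualTerm_add_smul (N : Matrix (Fin n) (Fin n) ℝ) (t : ℂ)
    (b l : Fin n → ℂ) (s : ℂ) (y : Fin n → ℤ) :
    dualTerm N t (b + s • l) 0 y = dualTerm N t b 0 y *
      cexp (s * (2 * π * Complex.I * (l ⬝ᵥ fun i => (y i : ℂ)))) := by
  rw [dualTerm, dualTerm, ← Complex.exp_add]
  congr 1
  simp only [add_dotProduct, smul_dotProduct, smul_eq_mul]
  ring

theorem norm_dotProduct_shift_le (L b : Fin n → ℂ) (x : Fin n → ℤ) :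
    ‖L ⬝ᵥ shift b x‖ ≤ (∑ i, ‖L i‖) * ∑ i, |(x i : ℝ)| + ‖L ⬝ᵥ b‖ := by
  have : shift b x = (fun i => (x i : ℂ)) + b := rfl
  rw [this, dotProduct_add]
  exact (norm_add_le _ _).trans (by gcongr; exact norm_dotProduct_int_le L x)

theorem spherical_poisson {M N : Matrix (Fin n) (Fin n) ℝ} (hM : M.IsSymm) (hN : N.IsSymm)
    (hpos : FormPos M) (hMN : M * N = 1) :
    ∃ C : ℂ, ∀ t : ℂ, 0 < t.re → ∀ (b l : Fin n → ℂ) (ν : ℕ),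
      (ν ≤ 1 ∨ l ⬝ᵥ M.map ofReal *ᵥ l = 0) →
      (-2 * π * t) ^ ν * ∑' x, (l ⬝ᵥ M.map ofReal *ᵥ shift b x) ^ ν * gaussTerm M t b 0 x =
        C * (1 / t ^ (1 / 2 : ℂ)) ^ n * ((2 * π * Complex.I) ^ ν *
          ∑' y, (l ⬝ᵥ fun i => (y i : ℂ)) ^ ν * dualTerm N t b 0 y) := by
  obtain ⟨C, hC⟩ := poisson_gauss hM hN hpos hMN
  refine ⟨C, fun t ht b l ν hν => ?_⟩
  set E := C * (1 / t ^ (1 / 2 : ℂ)) ^ n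
  set α : (Fin n → ℤ) → ℂ := fun x => -2 * π * t * (l ⬝ᵥ M.map ofReal *ᵥ shift b x) with hα
  set β : (Fin n → ℤ) → ℂ := fun y => 2 * π * Complex.I * (l ⬝ᵥ fun i => (y i : ℂ)) with hβ
  have hαb : ∀ x, ‖α x‖ ≤ ‖-2 * π * t‖ * (∑ i, ‖(l ᵥ* M.map ofReal) i‖) * ∑ i, |(x i : ℝ)| +
      ‖-2 * π * t‖ * ‖(l ᵥ* M.map ofReal) ⬝ᵥ b‖ := fun x => by
    rw [hα, norm_mul, dotProduct_mulVec, mul_assoc ‖_‖, ← mul_add]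
    exact mul_le_mul_of_nonneg_left (norm_dotProduct_shift_le _ _ _) (norm_nonneg _)
  have hβb : ∀ x, ‖β x‖ ≤ ‖2 * π * Complex.I‖ * (∑ i, ‖l i‖) * ∑ i, |(x i : ℝ)| + 0 := fun x => by
    rw [hβ, norm_mul, mul_assoc ‖_‖, add_zero]
    exact mul_le_mul_of_nonneg_left (norm_dotProduct_int_le _ _) (norm_nonneg _)
  have hG := fun s : ℂ => hasSum_tsum_mul_exp (s := s)
    ((gaussBdd_gaussTerm hM hpos ht b 0).summable_mul_exp hαb (norm_nonneg s))
  have hH := fun s : ℂ => (hasSum_tsum_mul_exp (s := s)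
    ((gaussBdd_dualTerm hN (hpos.inverse hMN) ht b 0).summable_mul_exp hβb
      (norm_nonneg s))).mul_left E
  have hH' : ∀ s : ℂ, HasSum (fun ν : ℕ => s ^ ν * (E * ∑' y, dualTerm N t b 0 y * β y ^ ν /
      ν.factorial)) (E * ∑' y, dualTerm N t b 0 y * cexp (s * β y)) := fun s =>
    by
    simpa only [mul_left_comm E] using hH s
  have key := coeff_eq_of_gaussian_twist hG hH' (κ := -π * t * (l ⬝ᵥ M.map ofReal *ᵥ l))
    (fun s => ?_) (ν := ν) (hν.imp_right fun h => by rw [h, mul_zero])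
  · have e : ∀ (F γ : (Fin n → ℤ) → ℂ) (k : ℂ), ∑' x, F x * (k * γ x) ^ ν / (ν.factorial : ℂ) =
        (ν.factorial : ℂ)⁻¹ * (k ^ ν * ∑' x, γ x ^ ν * F x) := fun F γ k => by
      rw [← tsum_mul_left, ← tsum_mul_left]
      exact tsum_congr fun x => by rw [mul_pow]; ring
    have hf : (ν.factorial : ℂ)⁻¹ ≠ 0 := inv_ne_zero (by exact_mod_cast ν.factorial_ne_zero)
    rw [hα, hβ, e, e, mul_left_comm] at key
    exact (mul_left_cancel₀ hf key).symm
  · have h := hC t ht (b + s • l) 0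
    simp only [gaussTerm_add_smul hM, dualTerm_add_smul, tsum_mul_left] at h
    exact h.symm

end SphericalPoisson

/-- A positive definite even integral quadratic form `Q` with Gram matrix `A`, together with an
integral multiple `B = N • A⁻¹` of the inverse matrix which is even, with quadratic form `R`. -/
structure EvenForm (n : ℕ) where
  A : Matrix (Fin n) (Fin n) ℤ
  symm : A.IsSymm
  pos : FormPos (A.map (Int.cast : ℤ → ℝ))
  Q : (Fin n → ℤ) → ℤ
  two_mul_Q : ∀ x, 2 * Q x = x ⬝ᵥ A *ᵥ x
  N : ℕ
  N_pos : 0 < N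
  B : Matrix (Fin n) (Fin n) ℤ
  B_symm : B.IsSymm
  A_mul_B : A * B = (N : ℤ) • 1
  R : (Fin n → ℤ) → ℤ
  two_mul_R : ∀ y, 2 * R y = y ⬝ᵥ B *ᵥ y

/-- The additive character `z ↦ exp (2πiz)`. -/
noncomputable def expTwoPi (z : ℂ) : ℂ := cexp (2 * π * Complex.I * z)

theorem expTwoPi_add (z w : ℂ) : expTwoPi (z + w) = expTwoPi z * expTwoPi w := by
  rw [expTwoPi, mul_add, Complex.exp_add]; rfl

theorem expTwoPi_int (k : ℤ) : expTwoPi k = 1 := by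
  rw [expTwoPi, mul_comm]; exact Complex.exp_int_mul_two_pi_mul_I k

theorem expTwoPi_eq_of_sub_int {z w : ℂ} (k : ℤ) (h : z = w + k) : expTwoPi z = expTwoPi w := by
  rw [h, expTwoPi_add, expTwoPi_int, mul_one]

theorem norm_expTwoPi_ofReal (r : ℝ) : ‖expTwoPi r‖ = 1 := by
  rw [expTwoPi, show 2 * (π : ℂ) * Complex.I * r = ((2 * π * r : ℝ) : ℂ) * Complex.I by
    push_cast; ring, Complex.norm_exp_ofReal_mul_I]

/-- Division with remainder by `d`, with the remainder taken in `ZMod d`. -/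
def intEquivZModProd (d : ℕ) [NeZero d] : ℤ ≃ ZMod d × ℤ where
  toFun x := (x, x / d)
  invFun p := p.1.val + d * p.2
  left_inv x := by
    simp only [ZMod.val_intCast, Int.emod_add_mul_ediv]
  right_inv p := by
    have hd : (d : ℤ) ≠ 0 := by exact_mod_cast NeZero.ne d
    have h0 : ((p.1.val : ℤ)) / d = 0 :=
      Int.ediv_eq_zero_of_lt (by positivity) (by exact_mod_cast p.1.val_lt)
    ext
    · simp
    · simp only [Int.add_mul_ediv_left _ _ hd, h0, zero_add]

/-- Splitting integral vectors according to their residues modulo `d`. -/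
def vecEquivZModProd (n d : ℕ) [NeZero d] : (Fin n → ℤ) ≃ (Fin n → ZMod d) × (Fin n → ℤ) :=
  (Equiv.piCongrRight fun _ => intEquivZModProd d).trans (Equiv.arrowProdEquivProdArrow _ _ _)

theorem vecEquivZModProd_symm_apply {n d : ℕ} [NeZero d] (r : Fin n → ZMod d) (k : Fin n → ℤ) :
    (vecEquivZModProd n d).symm (r, k) = fun i => ((r i).val : ℤ) + d * k i := rfl

theorem sum_residues_affine {n d : ℕ} [NeZero d] {g : (Fin n → ℤ) → ℂ}
    (hg : ∀ x y : Fin n → ℤ, g (fun i => x i + d * y i) = g x) (v : Fin n → ℤ)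
    {m : ℕ} (hm : m.Coprime d) :
    ∑ r : Fin n → ZMod d, g (fun i => v i + m * (r i).val) =
      ∑ r : Fin n → ZMod d, g (fun i => (r i).val) := by
  have hu : IsUnit (m : ZMod d) := (ZMod.isUnit_iff_coprime m d).2 hm
  refine Fintype.sum_bijective (fun (r : Fin n → ZMod d) i => (v i : ZMod d) + m * r i)
    (Finite.injective_iff_bijective.1 fun r s h => ?_) _ _ fun r => ?_
  · ext i
    exact hu.mul_left_cancel (add_left_cancel (congrFun h i))
  · have h : ∀ i, ∃ k : ℤ, v i + m * (r i).val =
        ((((v i : ZMod d) + m * r i).val : ℤ)) + d * k := fun i => by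
      have : (((v i + m * (r i).val : ℤ)) : ZMod d) =
          ((((((v i : ZMod d) + m * r i).val : ℕ) : ℤ)) : ZMod d) := by
        push_cast; simp
      rw [ZMod.intCast_eq_intCast_iff_dvd_sub] at this
      obtain ⟨k, hk⟩ := this
      exact ⟨-k, by linarith⟩
    choose k hk using h
    simp only [hk]
    exact hg _ k

namespace EvenForm

variable {n : ℕ} (S : EvenForm n)

/-- The linear form `x ↦ ᵗl A x`. -/
noncomputable def lin (l : Fin n → ℂ) (x : Fin n → ℤ) : ℂ :=
  l ⬝ᵥ S.A.map (Int.cast : ℤ → ℂ) *ᵥ fun i => (x i : ℂ)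

/-- The vector `u + m k`. -/
def point (u : Fin n → ℤ) (m : ℕ) (k : Fin n → ℤ) : Fin n → ℤ := fun i => u i + m * k i

/-- A term of the theta series. -/
noncomputable def term (l : Fin n → ℂ) (ν : ℕ) (τ : ℂ) (x : Fin n → ℤ) : ℂ :=
  S.lin l x ^ ν * expTwoPi (S.Q x * τ)

/-- The theta series attached to the coset `u + m ℤⁿ`. -/
noncomputable def theta (l : Fin n → ℂ) (ν m : ℕ) (u : Fin n → ℤ) (τ : ℂ) : ℂ :=
  ∑' k : Fin n → ℤ, S.term l ν τ (point u m k)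

/-- The real Gram matrix. -/
abbrev M : Matrix (Fin n) (Fin n) ℝ := S.A.map (Int.cast : ℤ → ℝ)

/-- The inverse of the real Gram matrix. -/
noncomputable abbrev M' : Matrix (Fin n) (Fin n) ℝ := (S.N : ℝ)⁻¹ • S.B.map (Int.cast : ℤ → ℝ)

theorem M_symm : S.M.IsSymm := by ext i j; simp [S.symm.apply]

theorem M'_symm : S.M'.IsSymm := by ext i j; simp [S.B_symm.apply]

theorem N_ne_zero : (S.N : ℝ) ≠ 0 := by exact_mod_cast S.N_pos.ne'

theorem M_mul_M' : S.M * S.M' = 1 := by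
  have h := congrArg (fun X : Matrix (Fin n) (Fin n) ℤ => X.map (Int.castRingHom ℝ)) S.A_mul_B
  simp only [Matrix.map_mul] at h
  have h2 : S.M * S.B.map (Int.cast : ℤ → ℝ) = (S.N : ℝ) • 1 := by
    refine h.trans ?_
    ext i j
    simp only [Matrix.map_apply, Matrix.smul_apply, Matrix.one_apply, smul_eq_mul]
    split_ifs <;> simp
  rw [Matrix.mul_smul, h2, smul_smul, inv_mul_cancel₀ S.N_ne_zero, one_smul]

theorem map_M : S.M.map ofReal = S.A.map (Int.cast : ℤ → ℂ) := by ext; simp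

theorem two_mul_Q_cast (x : Fin n → ℤ) : 2 * (S.Q x : ℂ) =
    (fun i => (x i : ℂ)) ⬝ᵥ S.A.map (Int.cast : ℤ → ℂ) *ᵥ fun i => (x i : ℂ) := by
  have := congrArg (Int.cast : ℤ → ℂ) (S.two_mul_Q x)
  push_cast at this
  rw [this]
  simp [dotProduct, mulVec]

theorem point_cast {m : ℕ} (hm : m ≠ 0) (u k : Fin n → ℤ) :
    (fun i => (point u m k i : ℂ)) = (m : ℂ) • shift (fun i => (u i : ℂ) / m) k := by
  have : (m : ℂ) ≠ 0 := by exact_mod_cast hm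
  ext i
  simp [point, shift]
  field_simp
  ring

theorem lin_point {m : ℕ} (hm : m ≠ 0) (l : Fin n → ℂ) (u k : Fin n → ℤ) :
    S.lin l (point u m k) = m * (l ⬝ᵥ S.M.map ofReal *ᵥ shift (fun i => (u i : ℂ) / m) k) := by
  rw [lin, point_cast hm, map_M, mulVec_smul, dotProduct_smul, smul_eq_mul]

theorem expTwoPi_Q_point {m : ℕ} (hm : m ≠ 0) (u k : Fin n → ℤ) (τ : ℂ) :
    expTwoPi (S.Q (point u m k) * τ) =
      gaussTerm S.M (-Complex.I * m ^ 2 * τ) (fun i => (u i : ℂ) / m) 0 k := by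
  have h := S.two_mul_Q_cast (point u m k)
  rw [point_cast hm, mulVec_smul, dotProduct_smul, smul_dotProduct, smul_eq_mul, smul_eq_mul] at h
  have h0 : toC (0 : Fin n → ℝ) = 0 := by ext i; simp [toC]
  rw [expTwoPi, gaussTerm, map_M, h0, zero_dotProduct]
  congr 1
  linear_combination π * Complex.I * τ * h

theorem re_pos {m : ℕ} (hm : m ≠ 0) {τ : ℂ} (hτ : 0 < τ.im) :
    0 < (-Complex.I * m ^ 2 * τ).re := by
  have : (-Complex.I * m ^ 2 * τ).re = (m : ℝ) ^ 2 * τ.im := by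
    rw [show -Complex.I * (m : ℂ) ^ 2 * τ = -(Complex.I * (((m : ℝ) ^ 2 : ℝ) * τ)) by
      push_cast; ring]
    rw [neg_re, I_mul_re, im_ofReal_mul]
    ring
  rw [this]
  positivity

theorem term_point {m : ℕ} (hm : m ≠ 0) (l : Fin n → ℂ) (ν : ℕ) (u k : Fin n → ℤ) (τ : ℂ) :
    S.term l ν τ (point u m k) = m ^ ν *
      ((l ⬝ᵥ S.M.map ofReal *ᵥ shift (fun i => (u i : ℂ) / m) k) ^ ν *
        gaussTerm S.M (-Complex.I * m ^ 2 * τ) (fun i => (u i : ℂ) / m) 0 k) := by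
  rw [term, lin_point S hm, expTwoPi_Q_point S hm, mul_pow, mul_assoc]

theorem summable_norm_term {m : ℕ} (hm : m ≠ 0) (l : Fin n → ℂ) (ν : ℕ) (u : Fin n → ℤ) {τ : ℂ}
    (hτ : 0 < τ.im) : Summable fun k => ‖S.term l ν τ (point u m k)‖ := by
  simp only [S.term_point hm, norm_mul ((m : ℂ) ^ ν)]
  refine ((gaussBdd_gaussTerm S.M_symm S.pos (re_pos hm hτ) _ 0).summable_norm_mul_pow
    (k₁ := ∑ i, ‖(l ᵥ* S.M.map ofReal) i‖)
    (k₀ := ‖(l ᵥ* S.M.map ofReal) ⬝ᵥ fun i => (u i : ℂ) / m‖) (fun x => ?_) ν).mul_left _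
  rw [dotProduct_mulVec]
  exact norm_dotProduct_shift_le _ _ _

/-- The exponential of the dual form. -/
noncomputable def dualExp (z : ℂ) (y : Fin n → ℤ) : ℂ := expTwoPi (S.R y * z / S.N)

theorem two_mul_R_cast (y : Fin n → ℤ) :
    ((fun i => (y i : ℝ)) ⬝ᵥ S.M' *ᵥ fun i => (y i : ℝ) : ℝ) = 2 * S.R y / S.N := by
  have := congrArg (Int.cast : ℤ → ℝ) (S.two_mul_R y)
  push_cast at this
  rw [this, smul_mulVec, dotProduct_smul, smul_eq_mul, inv_mul_eq_div]
  simp [dotProduct, mulVec]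

theorem dualTerm_eq {t : ℂ} (b : Fin n → ℂ) (y : Fin n → ℤ) :
    dualTerm S.M' t b 0 y = S.dualExp (Complex.I / t) y * expTwoPi (b ⬝ᵥ fun i => (y i : ℂ)) := by
  rw [dualTerm, dualExp, expTwoPi, expTwoPi, ← Complex.exp_add]
  have : (fun i => ((y i : ℝ) - (0 : Fin n → ℝ) i)) = fun i => (y i : ℝ) := by ext; simp
  congr 1
  rw [this, two_mul_R_cast]
  push_cast
  linear_combination (2 * π * S.R y / S.N / t) * Complex.I_sq.symm

theorem summable_norm_dual (l : Fin n → ℂ) (ν : ℕ) {z : ℂ} (hz : 0 < z.im) :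
    Summable fun y => ‖(l ⬝ᵥ fun i => (y i : ℂ)) ^ ν * S.dualExp z y‖ := by
  have hz0 : z ≠ 0 := fun h => by simp [h] at hz
  have ht : 0 < (Complex.I / z).re := by
    rw [div_eq_mul_inv, I_mul_re, inv_im, neg_div, neg_neg]
    exact div_pos hz (normSq_pos.2 hz0)
  refine ((gaussBdd_dualTerm S.M'_symm (S.pos.inverse S.M_mul_M') ht 0 0).summable_norm_mul_pow
    (k₁ := ∑ i, ‖l i‖) (k₀ := 0) (fun x => by simpa using norm_dotProduct_int_le l x) ν).congr
    fun y => ?_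
  rw [S.dualTerm_eq, zero_dotProduct, div_div_cancel₀ Complex.I_ne_zero]
  simp [expTwoPi]

/-- The finite exponential sum appearing in the expansion of a theta series at `b / d`. -/
noncomputable def phase (m : ℕ) (u : Fin n → ℤ) (b : ℤ) (d : ℕ) [NeZero d] (y : Fin n → ℤ) : ℂ :=
  ∑ r : Fin n → ZMod d, expTwoPi (b * S.Q (point u m fun i => (r i).val) / d +
    ((point u m fun i => (r i).val) ⬝ᵥ y : ℤ) / (m * d))

theorem norm_phase_le (m : ℕ) (u : Fin n → ℤ) (b : ℤ) (d : ℕ) [NeZero d] (y : Fin n → ℤ) :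
    ‖S.phase m u b d y‖ ≤ Fintype.card (Fin n → ZMod d) := by
  refine (norm_sum_le _ _).trans ?_
  rw [Finset.sum_congr rfl fun r _ => ?_, Finset.sum_const, nsmul_one, Finset.card_univ]
  rw [← norm_expTwoPi_ofReal (b * S.Q (point u m fun i => (r i).val) / d +
    ((point u m fun i => (r i).val) ⬝ᵥ y : ℤ) / (m * d))]
  push_cast
  rfl

theorem Q_add_smul (x k : Fin n → ℤ) (e : ℤ) :
    S.Q (fun i => x i + e * k i) = S.Q x + e * (k ⬝ᵥ S.A *ᵥ x) + e ^ 2 * S.Q k := by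
  have h := form_add S.symm x (e • k)
  simp only [mulVec_smul, smul_dotProduct, dotProduct_smul, smul_eq_mul] at h
  have h1 := S.two_mul_Q (x + e • k)
  have e1 : (fun i => x i + e * k i) = x + e • k := rfl
  rw [e1]
  have h2 := S.two_mul_Q x
  have h3 := S.two_mul_Q k
  refine mul_left_cancel₀ (two_ne_zero (α := ℤ)) ?_
  rw [h1, h, ← h2, ← h3]
  ring

theorem expTwoPi_Q_periodic (b : ℤ) (d : ℕ) [NeZero d] (x y : Fin n → ℤ) :
    expTwoPi (b * S.Q (fun i => x i + d * y i) / d) = expTwoPi (b * S.Q x / d) := by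
  have hd : (d : ℂ) ≠ 0 := by exact_mod_cast NeZero.ne d
  refine expTwoPi_eq_of_sub_int (b * (y ⬝ᵥ S.A *ᵥ x + d * S.Q y)) ?_
  rw [S.Q_add_smul x y d]
  push_cast
  field_simp
  ring

theorem cpow_half_pow {t : ℂ} {n : ℕ} (hn : Even n) :
    (1 / t ^ (1 / 2 : ℂ)) ^ n = (1 / t) ^ (n / 2) := by
  obtain ⟨h, rfl⟩ := hn
  rw [← two_mul, Nat.mul_div_cancel_left _ two_pos, pow_mul, div_pow, one_pow, one_div (2 : ℂ)]
  rw [show (t ^ ((2 : ℂ)⁻¹)) ^ 2 = t from by simp]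

theorem theta_expansion (hn : Even n) : ∃ C : ℂ, ∀ (l : Fin n → ℂ) (ν : ℕ),
    (ν ≤ 1 ∨ l ⬝ᵥ S.A.map (Int.cast : ℤ → ℂ) *ᵥ l = 0) → ∀ (m : ℕ) (_ : m ≠ 0) (u : Fin n → ℤ)
    (b : ℤ) (d : ℕ) [NeZero d] (w : ℂ), 0 < w.im →
    S.theta l ν m u (b / d - 1 / w) = C * (w / (Complex.I * (m * d) ^ 2)) ^ (n / 2) *
      ((m * d) ^ ν * (-w / (m * d) ^ 2) ^ ν) *
      ∑' y, S.phase m u b d y * ((l ⬝ᵥ fun i => (y i : ℂ)) ^ ν * S.dualExp (w / (m * d) ^ 2) y) := by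
  obtain ⟨C, hC⟩ := spherical_poisson S.M_symm S.M'_symm S.pos S.M_mul_M'
  refine ⟨C, fun l ν hl m hm u b d _ w hw => ?_⟩
  have hd : d ≠ 0 := NeZero.ne d
  have hdC : (d : ℂ) ≠ 0 := by exact_mod_cast hd
  have hmC : (m : ℂ) ≠ 0 := by exact_mod_cast hm
  have hw0 : w ≠ 0 := fun h => by simp [h] at hw
  have hpi : (π : ℂ) ≠ 0 := by exact_mod_cast Real.pi_ne_zero
  have hmd : m * d ≠ 0 := mul_ne_zero hm hd
  have him : 0 < (-1 / w).im := by
    rw [neg_div, neg_im, one_div, inv_im, neg_div, neg_neg]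
    exact div_pos hw (normSq_pos.2 hw0)
  have him' : 0 < ((b : ℂ) / d - 1 / w).im := by
    rw [sub_eq_add_neg, ← neg_div, add_im, show (b : ℂ) / d = ((b / d : ℝ) : ℂ) by push_cast; rfl,
      ofReal_im, zero_add]
    exact him
  set t : ℂ := -Complex.I * (m * d : ℕ) ^ 2 * (-1 / w) with ht
  have htre : 0 < t.re := re_pos hmd him
  have hzim : 0 < (w / (m * d) ^ 2).im := by
    rw [show w / ((m : ℂ) * d) ^ 2 = (((1 / (m * d) ^ 2 : ℝ)) : ℂ) * w by push_cast; ring,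
      im_ofReal_mul]
    positivity
  have ht0 : t ≠ 0 := fun h => by simp [h] at htre
  have hIt : Complex.I / t = w / (m * d) ^ 2 := by
    rw [ht]; push_cast; field_simp
  have h1t : 1 / t = w / (Complex.I * (m * d) ^ 2) := by
    rw [ht]; push_cast; field_simp
  have hpt : ∀ (r : Fin n → ZMod d) (k : Fin n → ℤ),
      point u m ((vecEquivZModProd n d).symm (r, k)) =
        point (point u m fun i => (r i).val) (m * d) k := fun r k => by
    ext i
    simp only [vecEquivZModProd_symm_apply, point]
    push_cast
    ring
  have hterm : ∀ (r : Fin n → ZMod d) (k : Fin n → ℤ),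
      S.term l ν (b / d - 1 / w) (point (point u m fun i => (r i).val) (m * d) k) =
      expTwoPi (b * S.Q (point u m fun i => (r i).val) / d) *
        S.term l ν (-1 / w) (point (point u m fun i => (r i).val) (m * d) k) := fun r k => by
    set v := point u m fun i => (r i).val
    have hper : expTwoPi (b * S.Q (point v (m * d) k) / d) = expTwoPi (b * S.Q v / d) := by
      rw [← S.expTwoPi_Q_periodic b d v (fun i => m * k i)]
      congr 5
      ext i
      simp only [point]
      push_cast
      ring
    rw [term, term, ← hper, mul_left_comm, ← expTwoPi_add]
    congr 2
    ring
  have hinner : ∀ r : Fin n → ZMod d,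
      ∑' k, S.term l ν (-1 / w) (point (point u m fun i => (r i).val) (m * d) k) =
      C * (w / (Complex.I * (m * d) ^ 2)) ^ (n / 2) *
      ((m * d) ^ ν * (-w / (m * d) ^ 2) ^ ν) * ∑' y : Fin n → ℤ,
        expTwoPi (((point u m fun i => (r i).val) ⬝ᵥ y : ℤ) / (m * d)) *
          ((l ⬝ᵥ fun i => (y i : ℂ)) ^ ν * S.dualExp (w / (m * d) ^ 2) y) := fun r => by
    set v := point u m fun i => (r i).val
    have h := hC t htre (fun i => (v i : ℂ) / (m * d : ℕ)) l ν
      (hl.imp_right fun h => by rwa [map_M])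
    rw [cpow_half_pow hn, h1t] at h
    simp only [S.term_point hmd, ← ht, tsum_mul_left]
    have hne : (-2 * π * t) ^ ν ≠ 0 := pow_ne_zero _ (by simp [hpi, ht0])
    rw [← mul_right_inj' hne, mul_left_comm, h]
    have hbase : 2 * (π : ℂ) * Complex.I = -2 * π * t * (-w / (m * d) ^ 2) := by
      rw [neg_div, ← hIt]; field_simp
    have hsum : ∑' y : Fin n → ℤ, (l ⬝ᵥ fun i => (y i : ℂ)) ^ ν *
        dualTerm S.M' t (fun i => (v i : ℂ) / (m * d : ℕ)) 0 y = ∑' y : Fin n → ℤ,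
        expTwoPi ((v ⬝ᵥ y : ℤ) / (m * d)) *
          ((l ⬝ᵥ fun i => (y i : ℂ)) ^ ν * S.dualExp (w / (m * d) ^ 2) y) := by
      refine tsum_congr fun y => ?_
      have hv : (fun i => (v i : ℂ) / (m * d : ℕ)) ⬝ᵥ (fun i => (y i : ℂ)) =
          (v ⬝ᵥ y : ℤ) / (m * d) := by
        simp only [dotProduct]
        push_cast
        rw [Finset.sum_div]
        exact Finset.sum_congr rfl fun i _ => by ring
      rw [S.dualTerm_eq, hIt, hv]
      ring
    rw [hsum, hbase, mul_pow (-2 * π * t)]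
    push_cast
    ring
  have hsumm := (S.summable_norm_term hm l ν u him').of_norm
  rw [theta, ← (vecEquivZModProd n d).symm.tsum_eq]
  have hsumm' : Summable fun c => S.term l ν (b / d - 1 / w)
      (point u m ((vecEquivZModProd n d).symm c)) :=
    (vecEquivZModProd n d).symm.summable_iff.2 hsumm
  rw [hsumm'.tsum_prod, tsum_fintype]
  simp only [hpt, hterm, tsum_mul_left, hinner]
  simp only [phase, expTwoPi_add, Finset.sum_mul]
  rw [Summable.tsum_finsetSum]
  · rw [Finset.mul_sum]
    refine Finset.sum_congr rfl fun r _ => ?_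
    simp only [mul_assoc (expTwoPi (b * _ / d)), tsum_mul_left]
    ring
  · intro r _
    refine Summable.of_norm ((S.summable_norm_dual l ν hzim).congr fun y => ?_)
    have e1 : ∀ p q : ℤ, ∀ a : ℕ, ‖expTwoPi (p * q / a)‖ = 1 := fun p q a => by
      rw [← norm_expTwoPi_ofReal (p * q / a)]; push_cast; rfl
    have e2 := e1 1 ((point u m fun i => (r i).val) ⬝ᵥ y) (m * d)
    push_cast at e2
    rw [one_mul] at e2
    rw [norm_mul (expTwoPi _ * _), norm_mul (expTwoPi _), e1, e2, one_mul, one_mul]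

end EvenForm

namespace EvenForm

variable {n : ℕ} (S : EvenForm n)

/-- The quadratic Gauss sum of the form `b Q` modulo `d`. -/
noncomputable def gauss (b : ℤ) (d : ℕ) [NeZero d] : ℂ :=
  ∑ r : Fin n → ZMod d, expTwoPi (b * S.Q (fun i => (r i).val) / d)

theorem form_B_mulVec (x y : Fin n → ℤ) : x ⬝ᵥ S.A *ᵥ (S.B *ᵥ y) = S.N * (x ⬝ᵥ y) := by
  rw [mulVec_mulVec, S.A_mul_B, smul_mulVec, one_mulVec, dotProduct_smul, smul_eq_mul]

theorem Q_B_mulVec (y : Fin n → ℤ) : S.Q (S.B *ᵥ y) = S.N * S.R y := by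
  refine mul_left_cancel₀ (two_ne_zero (α := ℤ)) ?_
  rw [S.two_mul_Q, form_B_mulVec, mul_left_comm, S.two_mul_R, dotProduct_comm]

theorem phase_mul_eq {m : ℕ} (hm : m ≠ 0) (u : Fin n → ℤ) {a b c' : ℤ} {d : ℕ} [NeZero d]
    (hdet : a * d - b * (m ^ 2 * S.N * c') = 1) (y : Fin n → ℤ) :
    S.phase m u b d y * expTwoPi (-(c' * S.R y) / d) =
      S.gauss b d * expTwoPi (a * (u ⬝ᵥ y : ℤ) / m) := by
  have hd : (d : ℂ) ≠ 0 := by exact_mod_cast NeZero.ne d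
  have hmC : (m : ℂ) ≠ 0 := by exact_mod_cast hm
  have hcop : m.Coprime d := by
    rw [← Nat.isCoprime_iff_coprime]
    exact ⟨-b * (m * S.N * c'), a, by linear_combination hdet⟩
  have hg := sum_residues_affine (g := fun x => expTwoPi (b * S.Q x / d))
    (S.expTwoPi_Q_periodic b d) (fun i => u i - m * c' * (S.B *ᵥ y) i) hcop
  rw [phase, Finset.sum_mul, gauss, ← hg, Finset.sum_mul]
  refine Finset.sum_congr rfl fun r _ => ?_
  set x := point u m fun i => (r i).val with hx
  have e1 : (fun i => u i - m * c' * (S.B *ᵥ y) i + m * ((r i).val : ℤ)) =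
      fun i => x i + (-(m * c')) * (S.B *ᵥ y) i := by
    ext i; simp only [hx, point]; ring
  have e2 : x ⬝ᵥ y = u ⬝ᵥ y + m * ((fun i => ((r i).val : ℤ)) ⬝ᵥ y) := by
    simp only [hx, point, dotProduct, Finset.mul_sum, ← Finset.sum_add_distrib]
    exact Finset.sum_congr rfl fun i _ => by ring
  rw [e1, S.Q_add_smul, symm_dotProduct S.symm, form_B_mulVec, Q_B_mulVec, ← expTwoPi_add,
    ← expTwoPi_add]
  have e3 := congrArg (Int.cast : ℤ → ℂ) e2
  have hdetC := congrArg (Int.cast : ℤ → ℂ) hdet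
  push_cast at e3 hdetC
  refine expTwoPi_eq_of_sub_int (a * ((fun i => ((r i).val : ℤ)) ⬝ᵥ y) - a * c' * S.R y) ?_
  push_cast
  generalize ((x ⬝ᵥ y : ℤ) : ℂ) = X at *
  generalize ((u ⬝ᵥ y : ℤ) : ℂ) = U at *
  generalize ((((fun i => ((r i).val : ℤ)) ⬝ᵥ y : ℤ)) : ℂ) = Z at *
  field_simp
  linear_combination (-X + m * c' * S.R y) * hdetC + a * d * e3

theorem theta_transform (hn : Even n) {l : Fin n → ℂ} {ν : ℕ}
    (hl : ν ≤ 1 ∨ l ⬝ᵥ S.A.map (Int.cast : ℤ → ℂ) *ᵥ l = 0) {m : ℕ} (hm : m ≠ 0) (u : Fin n → ℤ)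
    {a b c : ℤ} {d : ℕ} [NeZero d] (hdet : a * d - b * c = 1) (hc : (m ^ 2 * S.N : ℤ) ∣ c)
    {τ : ℂ} (hτ : 0 < τ.im) :
    S.theta l ν m u ((a * τ + b) / (c * τ + d)) =
      S.gauss b d / d ^ (n / 2) * (c * τ + d) ^ (n / 2 + ν) * S.theta l ν m (a • u) τ := by
  obtain ⟨C, hC⟩ := S.theta_expansion hn
  obtain ⟨c', hcdef⟩ := hc
  have hd : (d : ℂ) ≠ 0 := by exact_mod_cast NeZero.ne d
  have hmC : (m : ℂ) ≠ 0 := by exact_mod_cast hm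
  have hN : (S.N : ℂ) ≠ 0 := by exact_mod_cast S.N_pos.ne'
  have hτ0 : τ ≠ 0 := fun h => by simp [h] at hτ
  have him : 0 < (-1 / τ).im := by
    rw [neg_div, neg_im, one_div, inv_im, neg_div, neg_neg]
    exact div_pos hτ (normSq_pos.2 hτ0)
  set w : ℂ := -(d * c : ℤ) + (d ^ 2 : ℝ) * (-1 / τ) with hw
  have hwim : 0 < w.im := by
    rw [hw, add_im, neg_im, intCast_im, im_ofReal_mul, neg_zero, zero_add]
    have := NeZero.pos d
    positivity
  have hw0 : w ≠ 0 := fun h => by simp [h] at hwim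
  have hwj : w * τ = -(d * (c * τ + d)) := by
    rw [hw]; push_cast; field_simp; ring
  have hj : (c : ℂ) * τ + d ≠ 0 := fun h => by
    rw [h, mul_zero, neg_zero] at hwj
    exact mul_ne_zero hw0 hτ0 hwj
  have hdetC := congrArg (Int.cast : ℤ → ℂ) hdet
  push_cast at hdetC
  have hpt : ((a : ℂ) * τ + b) / (c * τ + d) = b / d - 1 / w := by
    have h1w : 1 / w = -τ / (d * (c * τ + d)) := by
      rw [div_eq_div_iff hw0 (mul_ne_zero hd hj)]
      linear_combination hwj
    rw [h1w, neg_div, sub_neg_eq_add, div_add_div _ _ hd (mul_ne_zero hd hj),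
      div_eq_div_iff hj (mul_ne_zero hd (mul_ne_zero hd hj))]
    linear_combination τ * d * (c * τ + d) * hdetC
  have hτ' : τ = ((0 : ℤ) : ℂ) / ((1 : ℕ) : ℂ) - 1 / (-1 / τ) := by
    push_cast; field_simp; ring
  have key : ∀ y, S.phase m u b d y *
        ((l ⬝ᵥ fun i => (y i : ℂ)) ^ ν * S.dualExp (w / (m * d) ^ 2) y) =
      S.gauss b d * (S.phase m (a • u) 0 1 y *
        ((l ⬝ᵥ fun i => (y i : ℂ)) ^ ν * S.dualExp (-1 / τ / (m * (1 : ℕ)) ^ 2) y)) := fun y => by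
    have h1 : S.dualExp (w / (m * d) ^ 2) y = expTwoPi (-(c' * S.R y) / d) *
        S.dualExp (-1 / τ / (m * (1 : ℕ)) ^ 2) y := by
      rw [dualExp, dualExp, ← expTwoPi_add, hw, hcdef]
      congr 1
      push_cast
      field_simp
    have h2 : S.phase m (a • u) 0 1 y = expTwoPi (a * (u ⬝ᵥ y : ℤ) / m) := by
      rw [phase, Fintype.sum_unique]
      have hz : ∀ i, ((default : Fin n → ZMod 1) i).val = 0 := fun i => by
        rw [Subsingleton.elim ((default : Fin n → ZMod 1) i) 0, ZMod.val_zero]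
      congr 1
      simp only [point, dotProduct, hz]
      simp [Finset.mul_sum, mul_assoc]
    have h3 := S.phase_mul_eq hm u (a := a) (b := b) (c' := c') (d := d)
      (by rw [← hcdef]; exact hdet) y
    rw [h1, h2]
    linear_combination ((l ⬝ᵥ fun i => (y i : ℂ)) ^ ν *
        S.dualExp (-1 / τ / (m * (1 : ℕ)) ^ 2) y) * h3
  have hR := hC l ν hl m hm (a • u) 0 1 (-1 / τ) him
  rw [← hτ'] at hR
  rw [hpt, hC l ν hl m hm u b d w hwim, hR]
  simp only [key, tsum_mul_left]
  generalize (∑' y, S.phase m (a • u) 0 1 y *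
        ((l ⬝ᵥ fun i => (y i : ℂ)) ^ ν * S.dualExp (-1 / τ / (m * (1 : ℕ)) ^ 2) y)) = T
  have f1 : w / (Complex.I * (m * d) ^ 2) =
      (-1 / τ / (Complex.I * (m * (1 : ℕ)) ^ 2)) * (c * τ + d) / d := by
    push_cast
    field_simp
    linear_combination hwj
  have f2 : (m * d) * (-w / (m * d) ^ 2) =
      ((m * (1 : ℕ)) * (-(-1 / τ) / (m * (1 : ℕ)) ^ 2)) * (c * τ + d) := by
    push_cast
    field_simp
    linear_combination -hwj
  rw [← mul_pow, ← mul_pow, f1, f2]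
  generalize -1 / τ / (Complex.I * (m * (1 : ℕ)) ^ 2) = p
  generalize (m * (1 : ℕ)) * (-(-1 / τ) / (m * (1 : ℕ)) ^ 2) = q
  generalize (c : ℂ) * τ + d = j
  rw [div_pow, mul_pow, mul_pow, pow_add]
  ring

end EvenForm

/-- Boundedness as the imaginary part tends to infinity, together with decay if `1 ≤ ν`. -/
def GoodAtInfty (ν : ℕ) (F : ℂ → ℂ) : Prop :=
  (∃ A K : ℝ, ∀ τ, A ≤ τ.im → ‖F τ‖ ≤ K) ∧
    (1 ≤ ν → Tendsto F (comap Complex.im atTop) (nhds 0))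

theorem goodAtInfty_tsum {X : Type*} {ν : ℕ} {g : X → ℂ} {q : X → ℝ} {E : ℂ → X → ℂ}
    (hq : ∀ x, 0 ≤ q x) (hE : ∀ z x, ‖E z x‖ = Real.exp (-q x * z.im))
    (hs : Summable fun x => ‖g x‖ * Real.exp (-q x))
    (h0 : 1 ≤ ν → ∀ x, q x = 0 → g x = 0) :
    GoodAtInfty ν fun z => ∑' x, g x * E z x := by
  have hle : ∀ z : ℂ, 1 ≤ z.im → ∀ x, ‖g x * E z x‖ ≤ ‖g x‖ * Real.exp (-q x) := fun z hz x => by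
    rw [norm_mul, hE]
    gcongr
    nlinarith [hq x]
  refine ⟨⟨1, ∑' x, ‖g x‖ * Real.exp (-q x), fun z hz => ?_⟩, fun hν => ?_⟩
  · exact tsum_of_norm_bounded hs.hasSum (hle z hz)
  · rw [← tsum_zero (α := ℂ) (β := X)]
    refine tendsto_tsum_of_dominated_convergence hs (fun x => ?_) ?_
    · rcases (hq x).eq_or_lt with h | h
      · simpa [h0 hν x h.symm] using tendsto_const_nhds
      · rw [tendsto_zero_iff_norm_tendsto_zero]
        simp only [norm_mul, hE]
        rw [← mul_zero ‖g x‖]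
        refine Tendsto.const_mul _ (Real.tendsto_exp_atBot.comp ?_)
        exact (tendsto_id.const_mul_atTop_of_neg (neg_lt_zero.2 h)).comp tendsto_comap
    · filter_upwards [tendsto_comap.eventually (eventually_ge_atTop (1 : ℝ))] with z hz
      exact hle z hz

theorem GoodAtInfty.const_mul {ν : ℕ} {F : ℂ → ℂ} (h : GoodAtInfty ν F) (K : ℂ) :
    GoodAtInfty ν fun z => K * F z := by
  obtain ⟨⟨A, B, hb⟩, ht⟩ := h
  refine ⟨⟨A, ‖K‖ * B, fun τ hτ => ?_⟩, fun hν => ?_⟩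
  · rw [norm_mul]; gcongr; exact hb τ hτ
  · simpa using (ht hν).const_mul K

theorem GoodAtInfty.comp_affine {ν : ℕ} {F : ℂ → ℂ} (h : GoodAtInfty ν F) {r s : ℝ} (hr : 0 < r) :
    GoodAtInfty ν fun z => F (r * z + s) := by
  obtain ⟨⟨A, B, hb⟩, ht⟩ := h
  have him : ∀ z : ℂ, ((r : ℂ) * z + s).im = r * z.im := fun z => by simp
  refine ⟨⟨A / r, B, fun τ hτ => hb _ ?_⟩, fun hν => (ht hν).comp ?_⟩
  · rw [him]; rw [div_le_iff₀ hr] at hτ; linarith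
  · rw [tendsto_comap_iff]
    refine (Tendsto.const_mul_atTop hr (tendsto_comap (f := Complex.im))).congr fun z => ?_
    simp [him]

theorem GoodAtInfty.congr_norm {ν : ℕ} {F G : ℂ → ℂ} (h : GoodAtInfty ν F)
    (hFG : ∀ z, 0 < z.im → ‖G z‖ = ‖F z‖) : GoodAtInfty ν G := by
  obtain ⟨⟨A, B, hb⟩, ht⟩ := h
  refine ⟨⟨max A 1, B, fun τ hτ => ?_⟩, fun hν => ?_⟩
  · rw [hFG τ (by linarith [le_max_right A 1])]
    exact hb τ ((le_max_left _ _).trans hτ)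
  · rw [tendsto_zero_iff_norm_tendsto_zero]
    refine (tendsto_zero_iff_norm_tendsto_zero.1 (ht hν)).congr' ?_
    filter_upwards [tendsto_comap.eventually (eventually_gt_atTop (0 : ℝ))] with z hz
    exact (hFG z hz).symm

theorem norm_expTwoPi_mul (q : ℝ) (z : ℂ) :
    ‖expTwoPi (q * z)‖ = Real.exp (-(2 * π * q) * z.im) := by
  rw [expTwoPi, Complex.norm_exp,
    show 2 * (π : ℂ) * Complex.I * (q * z) = ((2 * π * q : ℝ) : ℂ) * (Complex.I * z) by
      push_cast; ring, re_ofReal_mul, I_mul_re]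
  congr 1; ring

namespace EvenForm

variable {n : ℕ} (S : EvenForm n)

theorem Q_pos {x : Fin n → ℤ} (hx : x ≠ 0) : 0 < S.Q x := by
  have h := S.pos (fun i => (x i : ℝ)) fun h => hx (by
    ext i; simpa using congrFun h i)
  have h2 := congrArg (Int.cast : ℤ → ℝ) (S.two_mul_Q x)
  have h3 : ((x ⬝ᵥ S.A *ᵥ x : ℤ) : ℝ) =
      (fun i => (x i : ℝ)) ⬝ᵥ S.A.map (Int.cast : ℤ → ℝ) *ᵥ fun i => (x i : ℝ) := by
    simp [dotProduct, mulVec]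
  rw [← h3, ← h2] at h
  have : 0 < 2 * S.Q x := by exact_mod_cast h
  linarith

theorem Q_zero : S.Q 0 = 0 := by
  have := S.two_mul_Q 0
  simpa using this

theorem R_pos {y : Fin n → ℤ} (hy : y ≠ 0) : 0 < S.R y := by
  have h := S.pos.inverse S.M_mul_M' (fun i => (y i : ℝ)) fun h => hy (by
    ext i; simpa using congrFun h i)
  rw [two_mul_R_cast] at h
  have hN : (0 : ℝ) < S.N := by exact_mod_cast S.N_pos
  rw [lt_div_iff₀ hN] at h
  have : (0 : ℝ) < S.R y := by linarith
  exact_mod_cast this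

theorem R_zero : S.R 0 = 0 := by
  have := S.two_mul_R 0
  simpa using this

theorem Q_nonneg (x : Fin n → ℤ) : 0 ≤ S.Q x := by
  rcases eq_or_ne x 0 with rfl | h
  · exact S.Q_zero.ge
  · exact (S.Q_pos h).le

theorem R_nonneg (x : Fin n → ℤ) : 0 ≤ S.R x := by
  rcases eq_or_ne x 0 with rfl | h
  · exact S.R_zero.ge
  · exact (S.R_pos h).le

theorem goodAtInfty_theta (l : Fin n → ℂ) (ν : ℕ) {m : ℕ} (hm : m ≠ 0) (u : Fin n → ℤ) :
    GoodAtInfty ν (S.theta l ν m u) := by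
  refine goodAtInfty_tsum (g := fun k => S.lin l (point u m k) ^ ν)
    (q := fun k => 2 * π * S.Q (point u m k)) (E := fun τ k => expTwoPi (S.Q (point u m k) * τ))
    (fun k => ?_) (fun z k => ?_) ?_ fun hν k hk => ?_
  · have : (0 : ℝ) ≤ S.Q (point u m k) := by exact_mod_cast S.Q_nonneg _
    positivity
  · rw [← norm_expTwoPi_mul]; push_cast; rfl
  · refine (S.summable_norm_term hm l ν u (τ := Complex.I) (by simp)).congr fun k => ?_
    have := norm_expTwoPi_mul (S.Q (point u m k)) Complex.I
    rw [term, norm_mul]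
    push_cast at this
    rw [this]
    simp
  · have hQ : S.Q (point u m k) = 0 := by
      simpa [Real.pi_ne_zero] using hk
    have hx : point u m k = 0 := by
      by_contra h
      exact (S.Q_pos h).ne' hQ
    have h0 : S.lin l 0 = 0 := by simp [lin, dotProduct, mulVec]
    simp only [hx, h0]
    exact zero_pow (by omega)

theorem goodAtInfty_dual (l : Fin n → ℂ) (ν : ℕ) {Φ : (Fin n → ℤ) → ℂ} {K : ℝ}
    (hΦ : ∀ y, ‖Φ y‖ ≤ K) : GoodAtInfty ν fun z =>
      ∑' y, Φ y * ((l ⬝ᵥ fun i => (y i : ℂ)) ^ ν * S.dualExp z y) := by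
  have hN : (0 : ℝ) < S.N := by exact_mod_cast S.N_pos
  have hE : ∀ (z : ℂ) (y : Fin n → ℤ), ‖S.dualExp z y‖ =
      Real.exp (-(2 * π * (S.R y / S.N)) * z.im) :=
    fun z y => by
      rw [← norm_expTwoPi_mul, dualExp]; push_cast; congr 2; ring
  have := goodAtInfty_tsum (ν := ν) (g := fun y : Fin n → ℤ => Φ y * (l ⬝ᵥ fun i => (y i : ℂ)) ^ ν)
    (q := fun y => 2 * π * (S.R y / S.N)) (E := S.dualExp)
    (fun y => ?_) hE ?_ fun hν y hy => ?_
  · simpa only [mul_assoc] using this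
  · have : (0 : ℝ) ≤ S.R y := by exact_mod_cast S.R_nonneg _
    positivity
  · refine Summable.of_nonneg_of_le (fun y => by positivity) (fun y => ?_)
      ((S.summable_norm_dual l ν (z := Complex.I) (by simp)).mul_left K)
    have h1 := hE Complex.I y
    rw [Complex.I_im, mul_one] at h1
    rw [norm_mul, norm_mul, h1, mul_assoc]
    gcongr
    exact hΦ y
  · have hR : S.R y = 0 := by simpa [Real.pi_ne_zero, hN.ne'] using hy
    have hx : y = 0 := by
      by_contra h
      exact (S.R_pos h).ne' hR
    subst hx
    have : (l ⬝ᵥ fun i => (((0 : Fin n → ℤ) i : ℤ) : ℂ)) = 0 := by simp [dotProduct]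
    simp only [this]
    rw [zero_pow (by omega), mul_zero]

theorem Q_neg (x : Fin n → ℤ) : S.Q (-x) = S.Q x := by
  have h1 := S.two_mul_Q x
  have h2 := S.two_mul_Q (-x)
  rw [mulVec_neg, neg_dotProduct, dotProduct_neg, neg_neg] at h2
  linarith

theorem theta_congr (l : Fin n → ℂ) (ν m : ℕ) {u v : Fin n → ℤ} (h : ∀ i, (m : ℤ) ∣ v i - u i)
    (τ : ℂ) : S.theta l ν m v τ = S.theta l ν m u τ := by
  choose w hw using h
  rw [theta, theta, ← (Equiv.addRight w).tsum_eq fun k => S.term l ν τ (point u m k)]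
  refine tsum_congr fun k => ?_
  congr 1
  ext i
  simp only [point, Equiv.coe_addRight, Pi.add_apply]
  linear_combination hw i

theorem theta_neg (l : Fin n → ℂ) (ν m : ℕ) (u : Fin n → ℤ) (τ : ℂ) :
    S.theta l ν m (-u) τ = (-1) ^ ν * S.theta l ν m u τ := by
  rw [theta, theta, ← (Equiv.neg (Fin n → ℤ)).tsum_eq, ← tsum_mul_left]
  refine tsum_congr fun k => ?_
  have h : point (-u) m (Equiv.neg _ k) = -point u m k := by
    ext i; simp [point]; ring
  have hl : S.lin l (-point u m k) = -1 * S.lin l (point u m k) := by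
    simp [lin, dotProduct, mulVec]
  rw [h, term, term, Q_neg, hl, mul_pow, mul_assoc]

theorem theta_add_int (l : Fin n → ℂ) (ν m : ℕ) (u : Fin n → ℤ) (τ : ℂ) (b : ℤ) :
    S.theta l ν m u (τ + b) = S.theta l ν m u τ := by
  refine tsum_congr fun k => ?_
  rw [term, term]
  congr 1
  exact expTwoPi_eq_of_sub_int (S.Q (point u m k) * b) (by push_cast; ring)

theorem goodAtInfty_cusp_of_pos (hn : Even n) {l : Fin n → ℂ} {ν : ℕ}
    (hl : ν ≤ 1 ∨ l ⬝ᵥ S.A.map (Int.cast : ℤ → ℂ) *ᵥ l = 0) {m : ℕ} (hm : m ≠ 0) (u : Fin n → ℤ)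
    {a b d : ℤ} {c : ℕ} [NeZero c] (hdet : a * d - b * c = 1) :
    GoodAtInfty ν fun τ => (c * τ + d) ^ (-((n / 2 + ν : ℕ) : ℤ)) *
      S.theta l ν m u ((a * τ + b) / (c * τ + d)) := by
  obtain ⟨C, hC⟩ := S.theta_expansion hn
  have hc : (c : ℂ) ≠ 0 := by exact_mod_cast NeZero.ne c
  have hcR : (c : ℝ) ≠ 0 := by exact_mod_cast NeZero.ne c
  have hmC : (m : ℂ) ≠ 0 := by exact_mod_cast hm
  have hmR : (m : ℝ) ≠ 0 := by exact_mod_cast hm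
  have hdetC := congrArg (Int.cast : ℤ → ℂ) hdet
  push_cast at hdetC
  have hr : (0 : ℝ) < 1 / m ^ 2 := by positivity
  refine (((S.goodAtInfty_dual l ν (S.norm_phase_le m u a c)).comp_affine hr
    (s := d / (c * m ^ 2))).const_mul (C * (c / (Complex.I * (m * c) ^ 2)) ^ (n / 2) *
      ((m * c) ^ ν * (-c / (m * c) ^ 2) ^ ν))).congr_norm fun τ hτ => ?_
  congr 1
  have hjim : 0 < ((c : ℂ) * τ + d).im := by
    have : ((c : ℂ) * τ + d).im = c * τ.im := by simp
    rw [this]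
    have := NeZero.pos c
    positivity
  have hwim : 0 < ((c : ℂ) * (c * τ + d)).im := by
    rw [← ofReal_natCast, im_ofReal_mul]
    have := NeZero.pos c
    rw [ofReal_natCast]
    positivity
  have hpt : ((a : ℂ) * τ + b) / (c * τ + d) = a / c - 1 / (c * (c * τ + d)) := by
    have hj : (c : ℂ) * τ + d ≠ 0 := fun h => by simp [h] at hjim
    rw [div_sub_div _ _ hc (mul_ne_zero hc hj), div_eq_div_iff hj
      (mul_ne_zero hc (mul_ne_zero hc hj))]
    linear_combination -c * (c * τ + d) * hdetC
  have hz : (c : ℂ) * (c * τ + d) / (m * c) ^ 2 = (1 / m ^ 2 : ℝ) * τ + (d / (c * m ^ 2) : ℝ) := by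
    push_cast
    field_simp
  have hj : (c : ℂ) * τ + d ≠ 0 := fun h => by simp [h] at hjim
  rw [hpt, hC l ν hl m hm u a c _ hwim, hz]
  have f1 : (c : ℂ) * (c * τ + d) / (Complex.I * (m * c) ^ 2) =
    c / (Complex.I * (m * c) ^ 2) * (c * τ + d) := by ring
  have f2 : -((c : ℂ) * (c * τ + d)) / (m * c) ^ 2 = (-c / (m * c) ^ 2) * (c * τ + d) := by ring
  rw [f1, f2]
  generalize (c : ℂ) * τ + d = j at *
  generalize (c : ℂ) / (Complex.I * (m * c) ^ 2) = p
  generalize -(c : ℂ) / (m * c) ^ 2 = q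
  rw [mul_pow p, mul_pow q, _root_.zpow_neg, zpow_natCast, pow_add]
  field_simp

theorem goodAtInfty_cusp (hn : Even n) {l : Fin n → ℂ} {ν : ℕ}
    (hl : ν ≤ 1 ∨ l ⬝ᵥ S.A.map (Int.cast : ℤ → ℂ) *ᵥ l = 0) {m : ℕ} (hm : m ≠ 0) (u : Fin n → ℤ)
    {a b c d : ℤ} (hdet : a * d - b * c = 1) :
    GoodAtInfty ν fun τ => (c * τ + d) ^ (-((n / 2 + ν : ℕ) : ℤ)) *
      S.theta l ν m u ((a * τ + b) / (c * τ + d)) := by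
  rcases lt_trichotomy c 0 with hc | rfl | hc
  · obtain ⟨e, rfl⟩ : ∃ e : ℕ, c = -e := ⟨c.natAbs, by omega⟩
    have : NeZero e := ⟨by rintro rfl; simp at hc⟩
    refine (S.goodAtInfty_cusp_of_pos hn hl hm u (a := -a) (b := -b) (d := -d) (c := e)
      (by linear_combination hdet)).congr_norm fun τ _ => ?_
    have h1 : ((-e : ℤ) : ℂ) * τ + d = -(e * τ + (-d : ℤ)) := by push_cast; ring
    have h2 : (a : ℂ) * τ + b = -((-a : ℤ) * τ + (-b : ℤ)) := by push_cast; ring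
    rw [h1, h2, neg_div_neg_eq, norm_mul, norm_mul, norm_zpow, norm_zpow, norm_neg]
  · have hu : IsUnit d := IsUnit.of_mul_eq_one a (by linear_combination hdet)
    have hd2 : d * d = 1 := by rcases Int.isUnit_iff.1 hu with rfl | rfl <;> rfl
    have had : a = d := by
      have : a * d = 1 := by linear_combination hdet
      calc a = a * (d * d) := by rw [hd2, mul_one]
        _ = d := by rw [← mul_assoc, this, one_mul]
    subst had
    have hd2C : (a : ℂ) * a = 1 := by exact_mod_cast hd2
    have ha : (a : ℂ) ≠ 0 := left_ne_zero_of_mul_eq_one hd2C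
    refine ((S.goodAtInfty_theta l ν hm u).const_mul ((a : ℂ) ^ (-((n / 2 + ν : ℕ) : ℤ)))).congr_norm
      fun τ _ => ?_
    have : ((a : ℂ) * τ + b) / (((0 : ℤ) : ℂ) * τ + a) = τ + (b * a : ℤ) := by
      push_cast
      rw [zero_mul, zero_add, div_eq_iff ha]
      linear_combination -b * hd2C
    rw [this, theta_add_int]
    simp
  · obtain ⟨e, rfl⟩ : ∃ e : ℕ, c = e := ⟨c.natAbs, by omega⟩
    have : NeZero e := ⟨by rintro rfl; simp at hc⟩
    exact S.goodAtInfty_cusp_of_pos hn hl hm u hdet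

theorem differentiableOn_theta (l : Fin n → ℂ) (ν : ℕ) {m : ℕ} (hm : m ≠ 0) (u : Fin n → ℤ) :
    DifferentiableOn ℂ (S.theta l ν m u) {τ | 0 < τ.im} := by
  intro τ hτ
  have hτ' : 0 < τ.im := hτ
  have hopen : IsOpen {z : ℂ | τ.im / 2 < z.im} := isOpen_lt continuous_const Complex.continuous_im
  refine (DifferentiableOn.differentiableAt (s := {z : ℂ | τ.im / 2 < z.im}) ?_
    (hopen.mem_nhds (by change τ.im / 2 < τ.im; linarith))).differentiableWithinAt
  refine differentiableOn_tsum_of_summable_norm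
    (S.summable_norm_term hm l ν u (τ := (τ.im / 2 : ℝ) * Complex.I) (by simpa using hτ'))
    (fun k => ?_) hopen fun k z hz => ?_
  · unfold term expTwoPi
    fun_prop
  · have hz' : τ.im / 2 < z.im := hz
    have e1 := norm_expTwoPi_mul (S.Q (point u m k)) z
    have e2 := norm_expTwoPi_mul (S.Q (point u m k)) ((τ.im / 2 : ℝ) * Complex.I)
    push_cast at e1 e2
    rw [term, term, norm_mul, norm_mul]
    push_cast
    rw [e1, e2]
    refine mul_le_mul_of_nonneg_left (Real.exp_le_exp.2 ?_) (norm_nonneg _)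
    have hQ : (0 : ℝ) ≤ S.Q (point u m k) := by exact_mod_cast S.Q_nonneg _
    have hi : ((τ.im : ℂ) / 2 * Complex.I).im = τ.im / 2 := by
      have : (τ.im : ℂ) / 2 = ((τ.im / 2 : ℝ) : ℂ) := by push_cast; rfl
      rw [this]; simp
    rw [hi]
    have : 0 ≤ 2 * π * (S.Q (point u m k) : ℝ) := by positivity
    nlinarith

end EvenForm

section FiniteFieldGauss

variable {F : Type*} [Field F] [Fintype F] [DecidableEq F]

/-- The quadratic character with complex values. -/
noncomputable def quadraticCharC (F : Type*) [Field F] [Fintype F] [DecidableEq F] : MulChar F ℂ :=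
  (quadraticChar F).ringHomComp (Int.castRingHom ℂ)

theorem quadraticCharC_apply (a : F) : quadraticCharC F a = (quadraticChar F a : ℂ) := rfl

theorem sum_addChar_mul_sq (hF : ringChar F ≠ 2) {ψ : AddChar F ℂ} (hψ : ψ.IsPrimitive) {a : F}
    (ha : a ≠ 0) :
    ∑ x, ψ (a * x ^ 2) = quadraticCharC F a * gaussSum (quadraticCharC F) ψ := by
  have h1 : ∑ x, ψ (a * x ^ 2) = ∑ y, ((quadraticChar F y : ℂ) + 1) * ψ (a * y) := by
    rw [← Finset.sum_fiberwise Finset.univ (fun x : F => x ^ 2) fun x => ψ (a * x ^ 2)]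
    refine Finset.sum_congr rfl fun y _ => ?_
    have := quadraticChar_card_sqrts hF y
    rw [Finset.sum_congr rfl (g := fun _ => ψ (a * y))
      fun x hx => by rw [(Finset.mem_filter.1 hx).2], Finset.sum_const, nsmul_eq_mul]
    congr 1
    rw [show ((quadraticChar F y : ℂ) + 1) = ((quadraticChar F y + 1 : ℤ) : ℂ) by push_cast; rfl,
      ← this, Int.cast_natCast]
    congr 2
    ext x; simp
  have h2 : ∑ y, ψ (a * y) = 0 := by
    have := AddChar.sum_eq_zero_of_ne_one (hψ ha)
    simpa [AddChar.mulShift_apply] using this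
  have h3 := gaussSum_mulShift_eq (quadraticCharC F) ψ (Units.mk0 a ha)
  simp only [h1, add_mul, one_mul, Finset.sum_add_distrib, h2, add_zero]
  have h4 : (quadraticCharC F)⁻¹ = quadraticCharC F :=
    (((quadraticChar_isQuadratic F).comp (Int.castRingHom ℂ))).inv
  rw [h4, Units.val_mk0] at h3
  rw [← h3]
  rfl

theorem gaussSum_quadraticCharC_sq (hF : ringChar F ≠ 2) {ψ : AddChar F ℂ} (hψ : ψ.IsPrimitive) :
    gaussSum (quadraticCharC F) ψ ^ 2 = quadraticCharC F (-1) * Fintype.card F := by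
  refine gaussSum_sq ?_ ((quadraticChar_isQuadratic F).comp (Int.castRingHom ℂ)) hψ
  intro h
  obtain ⟨a, ha⟩ := quadraticChar_exists_neg_one' hF
  have : quadraticCharC F (a : F) = (1 : MulChar F ℂ) (a : F) := DFunLike.congr_fun h (a : F)
  rw [quadraticCharC_apply, ha, MulChar.one_apply_coe] at this
  norm_num at this

theorem exists_diagonalization {F : Type*} [Field F] (hF : ringChar F ≠ 2) {n : ℕ}
    {M : Matrix (Fin n) (Fin n) F} (hM : M.IsSymm) :
    ∃ (P : Matrix (Fin n) (Fin n) F) (d : Fin n → F), IsUnit P.det ∧ Pᵀ * M * P = diagonal d := by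
  have : Invertible (2 : F) := invertibleOfNonzero (Ring.two_ne_zero hF)
  obtain ⟨v, hv⟩ := LinearMap.BilinForm.exists_orthogonal_basis
    (B := Matrix.toBilin' M) (by
      refine ⟨fun x y => ?_⟩
      simp only [Matrix.toBilin'_apply', RingHom.id_apply]
      rw [dotProduct_mulVec, ← mulVec_transpose, hM.eq, dotProduct_comm])
  let e : Fin (Module.finrank F (Fin n → F)) ≃ Fin n := finCongr (by simp)
  let w := v.reindex e
  refine ⟨(Pi.basisFun F (Fin n)).toMatrix w, fun i => w i ⬝ᵥ M *ᵥ w i, ?_, ?_⟩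
  · have := (Pi.basisFun F (Fin n)).invertibleToMatrix w
    exact (Matrix.isUnit_iff_isUnit_det _).1
      (isUnit_of_invertible ((Pi.basisFun F (Fin n)).toMatrix w))
  · ext i j
    have : ((((Pi.basisFun F (Fin n)).toMatrix w)ᵀ * M * (Pi.basisFun F (Fin n)).toMatrix w) i j)
        = w i ⬝ᵥ M *ᵥ w j := by
      rw [Matrix.mul_assoc, Matrix.mul_apply']
      congr 1
    rw [this, diagonal_apply]
    split_ifs with h
    · rw [h]
    · have h2 := LinearMap.isOrthoᵢ_def.1 hv (e.symm i) (e.symm j) (by simpa using h)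
      simpa [w, Matrix.toBilin'_apply'] using h2

theorem sum_addChar_form (hF : ringChar F ≠ 2) {ψ : AddChar F ℂ} (hψ : ψ.IsPrimitive) {n : ℕ}
    (hn : Even n) {M : Matrix (Fin n) (Fin n) F} (hM : M.IsSymm) (hdet : M.det ≠ 0) :
    ∑ x : Fin n → F, ψ (x ⬝ᵥ M *ᵥ x) =
      quadraticCharC F ((-1) ^ (n / 2) * M.det) * (Fintype.card F : ℂ) ^ (n / 2) := by
  obtain ⟨P, d, hP, hd⟩ := exists_diagonalization hF hM
  have hdd : P.det ^ 2 * M.det = ∏ i, d i := by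
    rw [← det_diagonal, ← hd, det_mul, det_mul, det_transpose]; ring
  have hPne : P.det ≠ 0 := hP.ne_zero
  have hne : ∀ i, d i ≠ 0 := by
    have : ∏ i, d i ≠ 0 := hdd ▸ mul_ne_zero (pow_ne_zero 2 hPne) hdet
    intro i
    exact (Finset.prod_ne_zero_iff.1 this) i (Finset.mem_univ i)
  have hbij : Function.Bijective fun x : Fin n → F => P *ᵥ x :=
    (Matrix.mulVec_injective_iff_isUnit.2
      ((Matrix.isUnit_iff_isUnit_det _).2 hP)).bijective_of_finite
  rw [← hbij.sum_comp fun x => ψ (x ⬝ᵥ M *ᵥ x)]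
  have h1 : ∀ x : Fin n → F, ψ ((P *ᵥ x) ⬝ᵥ M *ᵥ (P *ᵥ x)) = ∏ i, ψ (d i * x i ^ 2) := by
    intro x
    have : (P *ᵥ x) ⬝ᵥ M *ᵥ (P *ᵥ x) = ∑ i, d i * x i ^ 2 := by
      have h0 : (P *ᵥ x) ⬝ᵥ M *ᵥ (P *ᵥ x) = x ⬝ᵥ (Pᵀ * M * P) *ᵥ x := by
        rw [dotProduct_comm, dotProduct_mulVec, dotProduct_comm, ← mulVec_transpose, mulVec_mulVec,
          mulVec_mulVec, Matrix.mul_assoc]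
      rw [h0, hd]
      simp only [dotProduct, mulVec_diagonal]
      exact Finset.sum_congr rfl fun i _ => by ring
    rw [this]
    exact map_prod ψ.toMonoidHom (fun i => Multiplicative.ofAdd (d i * x i ^ 2)) Finset.univ
  simp only [h1]
  rw [← Fintype.piFinset_univ, ← Finset.prod_univ_sum (fun _ => Finset.univ)
    fun i x => ψ (d i * x ^ 2)]
  simp only [sum_addChar_mul_sq hF hψ (hne _), Finset.prod_mul_distrib, Finset.prod_const,
    Finset.card_univ, Fintype.card_fin]
  rw [← map_prod, ← hdd, map_mul, map_mul]
  have h3 : quadraticCharC F (P.det ^ 2) = 1 := by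
    rw [quadraticCharC_apply, quadraticChar_sq_one' hPne, Int.cast_one]
  have h4 : gaussSum (quadraticCharC F) ψ ^ n =
      (quadraticCharC F (-1) * Fintype.card F) ^ (n / 2) := by
    rw [← gaussSum_quadraticCharC_sq hF hψ, ← pow_mul, Nat.mul_div_cancel' hn.two_dvd]
  rw [h3, h4, mul_pow, map_pow]
  ring

end FiniteFieldGauss

namespace EvenForm

variable {n : ℕ} (S : EvenForm n)

/-- The discriminant `(-1)^(n/2) det A`. -/
def disc : ℤ := (-1) ^ (n / 2) * S.A.det

theorem gauss_prime (hn : Even n) {p : ℕ} [Fact p.Prime] (hp : p ≠ 2) {b : ℤ}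
    (hb : ¬ (p : ℤ) ∣ b) (hdet : ¬ (p : ℤ) ∣ S.A.det) :
    S.gauss b p = (jacobiSym S.disc p : ℂ) * (p : ℂ) ^ (n / 2) := by
  have hF : ringChar (ZMod p) ≠ 2 := by rwa [ZMod.ringChar_zmod_n]
  have h2 : (2 : ZMod p) ≠ 0 := Ring.two_ne_zero hF
  have hb' : (b : ZMod p) ≠ 0 := by rwa [Ne, ZMod.intCast_zmod_eq_zero_iff_dvd]
  have hd' : (S.A.det : ZMod p) ≠ 0 := by rwa [Ne, ZMod.intCast_zmod_eq_zero_iff_dvd]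
  set M : Matrix (Fin n) (Fin n) (ZMod p) :=
    ((b : ZMod p) * 2⁻¹) • S.A.map (Int.cast : ℤ → ZMod p) with hM
  have hMdet : M.det = ((b : ZMod p) * 2⁻¹) ^ n * S.A.det := by
    rw [hM, det_smul, Fintype.card_fin]
    congr 1
    exact ((Int.castRingHom (ZMod p)).map_det S.A).symm
  have hMsymm : M.IsSymm := by
    have : (S.A.map (Int.cast : ℤ → ZMod p)).IsSymm := by
      rw [IsSymm, ← transpose_map, S.symm.eq]
    rw [hM, IsSymm, transpose_smul, this.eq]
  have hk : (b : ZMod p) * 2⁻¹ ≠ 0 := mul_ne_zero hb' (inv_ne_zero h2)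
  have key := sum_addChar_form hF (ZMod.isPrimitive_stdAddChar p) hn hMsymm
    (hMdet ▸ mul_ne_zero (pow_ne_zero _ hk) hd')
  have hterm : ∀ r : Fin n → ZMod p, expTwoPi (b * S.Q (fun i => (r i).val) / p) =
      ZMod.stdAddChar (r ⬝ᵥ M *ᵥ r) := by
    intro r
    set x : Fin n → ℤ := fun i => (r i).val with hx
    have hr : r = fun i => ((x i : ℤ) : ZMod p) := by ext i; simp [hx]
    have e1 : r ⬝ᵥ M *ᵥ r = ((b * S.Q x : ℤ) : ZMod p) := by
      have e2 := congrArg (Int.cast : ℤ → ZMod p) (S.two_mul_Q x)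
      have e3 : ((x ⬝ᵥ S.A *ᵥ x : ℤ) : ZMod p) = r ⬝ᵥ S.A.map (Int.cast : ℤ → ZMod p) *ᵥ r := by
        rw [hr]; simp [dotProduct, mulVec, Matrix.map_apply]
      rw [hM, smul_mulVec, dotProduct_smul, ← e3, ← e2]
      push_cast
      rw [smul_eq_mul]
      field_simp
    rw [e1, ZMod.stdAddChar_coe, expTwoPi]
    push_cast
    congr 1
    ring
  rw [gauss, Finset.sum_congr rfl fun r _ => hterm r, key, ZMod.card, hMdet]
  congr 1
  have e4 : ((b : ZMod p) * 2⁻¹) ^ n = (((b : ZMod p) * 2⁻¹) ^ (n / 2)) ^ 2 := by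
    rw [← pow_mul, Nat.div_mul_cancel hn.two_dvd]
  rw [e4, mul_left_comm, map_mul, quadraticCharC_apply, quadraticChar_sq_one' (pow_ne_zero _ hk),
    Int.cast_one, one_mul, quadraticCharC_apply, ← jacobiSym.legendreSym.to_jacobiSym, legendreSym,
    disc]
  push_cast
  rfl

end EvenForm

section Kronecker

theorem exists_prime_dvd_sub {q : ℕ} (hq : q ≠ 0) {d : ℤ} (hd : IsCoprime d (q : ℤ)) :
    ∃ p : ℕ, p.Prime ∧ p ≠ 2 ∧ (q : ℤ) ∣ p - d := by
  have : NeZero q := ⟨hq⟩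
  have hu : IsUnit (d : ZMod q) := (ZMod.coe_int_isUnit_iff_isCoprime d q).2 hd.symm
  obtain ⟨p, hp2, hp, h⟩ := Nat.forall_exists_prime_gt_and_eq_mod hu 2
  refine ⟨p, hp, by omega, ?_⟩
  rw [← ZMod.intCast_zmod_eq_zero_iff_dvd]
  push_cast
  rw [h, sub_self]

theorem jacobiSym_reciprocity_one_mod_four {D : ℤ} (hD : D % 4 = 1) {b : ℕ} (hb : Odd b) :
    jacobiSym D b = jacobiSym b D.natAbs := by
  rcases le_total 0 D with h | h
  · obtain ⟨k, rfl⟩ := Int.eq_ofNat_of_zero_le h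
    rw [Int.natAbs_natCast]
    exact jacobiSym.quadratic_reciprocity_one_mod_four (by omega) hb
  · obtain ⟨k, hk⟩ := Int.eq_ofNat_of_zero_le (neg_nonneg.2 h)
    obtain rfl : D = -(k : ℤ) := by omega
    have hk4 : k % 4 = 3 := by omega
    have hko : Odd k := Nat.odd_iff.2 (by omega)
    rw [Int.natAbs_neg, Int.natAbs_natCast, jacobiSym.neg _ hb]
    rcases Nat.odd_mod_four_iff.1 (Nat.odd_iff.1 hb) with h1 | h3
    · rw [ZMod.χ₄_nat_one_mod_four h1, one_mul,
        jacobiSym.quadratic_reciprocity_one_mod_four' hko h1]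
    · rw [ZMod.χ₄_nat_three_mod_four h3, jacobiSym.quadratic_reciprocity_three_mod_four hk4 h3]
      ring

theorem jacobiSym_reciprocity_three_mod_four {D : ℤ} (hD : D % 4 = 3) {b : ℕ} (hb : b % 4 = 3) :
    jacobiSym D b = -jacobiSym b D.natAbs := by
  have hbo : Odd b := Nat.odd_iff.2 (by omega)
  rcases le_total 0 D with h | h
  · obtain ⟨k, rfl⟩ := Int.eq_ofNat_of_zero_le h
    rw [Int.natAbs_natCast]
    exact jacobiSym.quadratic_reciprocity_three_mod_four (by omega) hb
  · obtain ⟨k, hk⟩ := Int.eq_ofNat_of_zero_le (neg_nonneg.2 h)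
    obtain rfl : D = -(k : ℤ) := by omega
    rw [Int.natAbs_neg, Int.natAbs_natCast, jacobiSym.neg _ hbo,
      ZMod.χ₄_nat_three_mod_four hb, jacobiSym.quadratic_reciprocity_one_mod_four (by omega) hbo]
    ring

theorem kronecker_of_odd (D : ℤ) {d : ℕ} (hd : Odd d) : kronecker D d = jacobiSym D d := by
  have h0 : (d : ℤ) ≠ 0 := by
    rintro h
    obtain rfl : d = 0 := by exact_mod_cast h
    exact absurd hd (by decide)
  have hv : padicValNat 2 d = 0 := padicValNat.eq_zero_of_not_dvd hd.not_two_dvd_nat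
  rw [_root_.kronecker, if_neg h0, if_neg (by omega), Int.natAbs_natCast, hv]
  simp

theorem kronTwo_eq_jacobiSym {D : ℤ} (hD : D % 4 = 1) : kronTwo D = jacobiSym 2 D.natAbs := by
  have ho : Odd D.natAbs := Nat.odd_iff.2 (by omega)
  rw [jacobiSym.at_two ho, ZMod.χ₈_nat_eq_if_mod_eight, kronTwo]
  split_ifs <;> omega

theorem kronecker_of_one_mod_four {D : ℤ} (hD : D % 4 = 1) {d : ℕ} (hd : d ≠ 0) :
    kronecker D d = jacobiSym d D.natAbs := by
  obtain ⟨v, d', hd', rfl⟩ := Nat.exists_eq_two_pow_mul_odd hd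
  have hv : padicValNat 2 (2 ^ v * d') = v := by
    have hd0 : d' ≠ 0 := by rintro rfl; exact absurd hd' (by decide)
    rw [padicValNat.mul (by positivity) hd0, padicValNat.prime_pow,
      padicValNat.eq_zero_of_not_dvd hd'.not_two_dvd_nat, add_zero]
  rw [_root_.kronecker, if_neg (by exact_mod_cast hd), if_neg (by omega), Int.natAbs_natCast, hv,
    Nat.mul_div_cancel_left _ (by positivity), jacobiSym_reciprocity_one_mod_four hD hd',
    kronTwo_eq_jacobiSym hD]
  push_cast
  rw [jacobiSym.mul_left, jacobiSym.pow_left, one_mul]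

theorem kronecker_neg {D d : ℤ} (hd : d < 0) :
    kronecker D d = (if D < 0 then -1 else 1) * kronecker D (-d) := by
  rw [_root_.kronecker, _root_.kronecker, if_neg hd.ne, if_neg (show ¬ -d = 0 by omega),
    Int.natAbs_neg, if_neg (show ¬(-d < 0 ∧ D < 0) by omega)]
  simp only [hd, true_and, one_mul, mul_assoc]

end Kronecker

namespace EvenForm

variable {n : ℕ} (S : EvenForm n)

theorem posDef : (S.A.map (Int.cast : ℤ → ℝ)).PosDef := by
  refine PosDef.of_dotProduct_mulVec_pos ?_ fun x hx => by simpa using S.pos x hx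
  rw [IsHermitian, conjTranspose_eq_transpose_of_trivial, ← transpose_map, S.symm.eq]

theorem det_pos : 0 < S.A.det := by
  have h := S.posDef.det_pos
  rw [← Int.cast_pos (R := ℝ)]
  exact h.trans_eq ((Int.castRingHom ℝ).map_det S.A).symm

theorem det_dvd : S.A.det ∣ (S.N : ℤ) ^ n := by
  refine ⟨S.B.det, ?_⟩
  rw [← det_mul, S.A_mul_B, det_smul, det_one, Fintype.card_fin, mul_one]

theorem disc_dvd : S.disc ∣ (S.N : ℤ) ^ n := by
  refine (IsUnit.mul_left_dvd ?_).2 S.det_dvd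
  exact IsUnit.pow _ (by decide)

theorem disc_ne_zero : S.disc ≠ 0 :=
  mul_ne_zero (pow_ne_zero _ (by norm_num)) S.det_pos.ne'

theorem sign_disc : (if S.disc < 0 then (-1 : ℤ) else 1) = (-1) ^ (n / 2) := by
  have h := S.det_pos
  rcases neg_one_pow_eq_or ℤ (n / 2) with e | e
  · rw [e, disc, e, if_neg (by linarith)]
  · rw [e, disc, e, if_pos (by linarith)]

theorem isCoprime_disc {d c : ℤ} (hcop : IsCoprime d c) (hc : (S.N : ℤ) ∣ c) :
    IsCoprime d S.disc :=
  ((hcop.of_isCoprime_of_dvd_right hc).pow_right).of_isCoprime_of_dvd_right S.disc_dvd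

theorem gauss_one (b : ℤ) : S.gauss b 1 = 1 := by
  have h : ∀ z : ℤ, expTwoPi z = 1 := expTwoPi_int
  rw [gauss, Fintype.sum_unique]
  have := h (b * S.Q fun i => (((default : Fin n → ZMod 1) i).val : ℤ))
  push_cast at this
  simpa using this

variable {S} in
theorem theta_transform_prime (hn : Even n) {l : Fin n → ℂ} {ν : ℕ}
    (hl : ν ≤ 1 ∨ l ⬝ᵥ S.A.map (Int.cast : ℤ → ℂ) *ᵥ l = 0) {m : ℕ} (hm : m ≠ 0) (u : Fin n → ℤ)
    {a b c d : ℤ} (hdet : a * d - b * c = 1) (hc : (m ^ 2 * S.N : ℤ) ∣ c)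
    {p : ℕ} (hp : p.Prime) (hp2 : p ≠ 2) (hpd : c ∣ p - d) {τ : ℂ} (hτ : 0 < τ.im) :
    S.theta l ν m u ((a * τ + b) / (c * τ + d)) =
      jacobiSym S.disc p * (c * τ + d) ^ (n / 2 + ν) * S.theta l ν m (a • u) τ := by
  have := Fact.mk hp
  obtain ⟨j, hj⟩ := hpd
  have hdet' : a * p - (b + j * a) * c = 1 := by linear_combination hdet + a * hj
  have hNc : (S.N : ℤ) ∣ c := (Dvd.intro_left _ rfl).trans hc
  have hcop : IsCoprime (p : ℤ) c := ⟨a, -(b + j * a), by linear_combination hdet'⟩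
  have hpI : Prime (p : ℤ) := Nat.prime_iff_prime_int.1 hp
  have hb : ¬ (p : ℤ) ∣ b + j * a := fun h => hpI.not_isUnit <|
    isUnit_of_dvd_one <| by
      rw [← hdet']; exact dvd_sub (Dvd.intro_left _ rfl) (h.mul_right _)
  have hA : ¬ (p : ℤ) ∣ S.A.det := fun h => hpI.not_isUnit <|
    (S.isCoprime_disc hcop hNc).isUnit_of_dvd' dvd_rfl (h.mul_left _)
  have key := S.theta_transform hn hl hm u hdet' hc (τ := τ - j) (by simpa using hτ)
  rw [S.gauss_prime hn hp2 hb hA] at key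
  have hpow : (p : ℂ) ^ (n / 2) ≠ 0 := pow_ne_zero _ (by exact_mod_cast hp.ne_zero)
  have hjC := congrArg (Int.cast : ℤ → ℂ) hj
  push_cast at hjC key
  have e1 : (a : ℂ) * (τ - j) + (b + j * a) = a * τ + b := by ring
  have e2 : (c : ℂ) * (τ - j) + p = c * τ + d := by linear_combination hjC
  have e3 := S.theta_add_int l ν m (a • u) (τ - j) j
  rw [sub_add_cancel] at e3
  rwa [e1, e2, mul_div_cancel_right₀ _ hpow, ← e3] at key

theorem theta_zero_ne_zero : S.theta 0 0 1 0 Complex.I ≠ 0 := by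
  have hs := S.summable_norm_term one_ne_zero 0 0 0 (τ := Complex.I) (by simp)
  have hterm : ∀ k, S.term 0 0 Complex.I (point 0 1 k) =
      ((‖S.term 0 0 Complex.I (point 0 1 k)‖ : ℝ) : ℂ) := by
    intro k
    have : S.term 0 0 Complex.I (point 0 1 k) =
        ((Real.exp (-2 * π * S.Q (point 0 1 k)) : ℝ) : ℂ) := by
      rw [term, pow_zero, one_mul, expTwoPi, ofReal_exp]
      congr 1
      push_cast
      linear_combination (2 * π * S.Q (point 0 1 k) : ℂ) * Complex.I_mul_I
    rw [this, norm_real, Real.norm_of_nonneg (Real.exp_pos _).le]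
  rw [theta, tsum_congr hterm, ← ofReal_tsum, ofReal_ne_zero]
  refine (hs.tsum_pos (fun _ => norm_nonneg _) 0 ?_).ne'
  rw [norm_pos_iff, term, pow_zero, one_mul]
  exact Complex.exp_ne_zero _

/-- The discriminant is a quadratic residue modulo every odd prime `p ≡ 1 mod N`. -/
theorem jacobiSym_disc_eq_one (hn : Even n) {p : ℕ} (hp : p.Prime) (hp2 : p ≠ 2)
    (h : (S.N : ℤ) ∣ p - 1) : jacobiSym S.disc p = 1 := by
  have h1 := S.theta_transform hn (l := 0) (ν := 0) (Or.inl zero_le_one) one_ne_zero 0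
    (a := 1) (b := 0) (c := S.N) (d := 1) (by simp) (by simp) (τ := Complex.I) (by simp)
  have h2 := theta_transform_prime (S := S) hn (l := 0) (ν := 0) (Or.inl zero_le_one) one_ne_zero 0
    (a := 1) (b := 0) (c := S.N) (d := 1) (by simp) (by simp) hp hp2 h (τ := Complex.I) (by simp)
  rw [gauss_one] at h1
  push_cast at h1 h2
  rw [h1] at h2
  have hne : ((S.N : ℂ) * Complex.I + 1) ^ (n / 2 + 0) ≠ 0 := by
    refine pow_ne_zero _ fun h0 => ?_
    simpa using congrArg Complex.re h0
  rw [smul_zero, one_pow, div_one, one_mul] at h2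
  have h3 := mul_right_cancel₀ S.theta_zero_ne_zero h2
  have h4 : (jacobiSym S.disc p : ℂ) = 1 :=
    mul_right_cancel₀ hne (by rw [one_mul]; exact h3.symm)
  exact_mod_cast h4

theorem disc_mod_four (hn : Even n) (hodd : Odd S.N) : S.disc % 4 = 1 := by
  have hDodd : Odd S.disc := by
    have : Odd ((S.N : ℤ) ^ n) := Odd.pow (by exact_mod_cast hodd)
    obtain ⟨k, hk⟩ := S.disc_dvd
    exact Int.Odd.of_mul_left (hk ▸ this)
  by_contra hne
  have h3 : S.disc % 4 = 3 := by
    have := Int.odd_iff.1 hDodd; omega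
  have hM : Odd (S.N * S.disc.natAbs) := hodd.mul (Int.natAbs_odd.2 hDodd)
  set M := S.N * S.disc.natAbs with hMdef
  have hM0 : M ≠ 0 := by rintro h; rw [h] at hM; exact absurd hM (by decide)
  obtain ⟨p, hp, hp2, hdvd⟩ := exists_prime_dvd_sub (q := 4 * M) (by omega) (d := 1 + 2 * M)
    ⟨1 - 2 * M, M, by push_cast; ring⟩
  have hp4 : p % 4 = 3 := by
    have h4 : (4 : ℤ) ∣ p - (1 + 2 * M) :=
      (by push_cast; exact Dvd.intro _ rfl : (4 : ℤ) ∣ (4 * M : ℕ)).trans hdvd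
    have := Nat.odd_iff.1 hM
    omega
  have hpM : (M : ℤ) ∣ p - 1 := by
    have h5 : (M : ℤ) ∣ p - (1 + 2 * M) :=
      (by push_cast; exact Dvd.intro_left _ rfl : (M : ℤ) ∣ (4 * M : ℕ)).trans hdvd
    have := h5.add (Dvd.intro_left (2 : ℤ) rfl : (M : ℤ) ∣ 2 * M)
    rwa [show (p : ℤ) - (1 + 2 * M) + 2 * M = p - 1 by ring] at this
  have hN : (S.N : ℤ) ∣ M := by rw [hMdef]; push_cast; exact Dvd.intro _ rfl
  have hD : (S.disc.natAbs : ℤ) ∣ M := by rw [hMdef, Nat.cast_mul]; exact Dvd.intro_left _ rfl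
  have h1 := S.jacobiSym_disc_eq_one hn hp hp2 (hN.trans hpM)
  rw [jacobiSym_reciprocity_three_mod_four h3 hp4,
    jacobiSym.mod_left' (a₂ := 1) (Int.ModEq.symm ((Int.modEq_iff_dvd).2 (hD.trans hpM))),
    jacobiSym.one_left] at h1
  norm_num at h1

theorem exists_prime_kronecker (hn : Even n) {c : ℤ} (hc0 : c ≠ 0) (hc : (S.N : ℤ) ∣ c) {d : ℕ}
    (hcop : IsCoprime (d : ℤ) c) :
    ∃ p : ℕ, p.Prime ∧ p ≠ 2 ∧ c ∣ p - d ∧ jacobiSym S.disc p = kronecker S.disc d := by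
  have hD := S.isCoprime_disc hcop hc
  have hDC : IsCoprime (d : ℤ) ((S.disc.natAbs * c.natAbs : ℕ) : ℤ) := by
    push_cast
    exact (hD.abs_right).mul_right (hcop.abs_right)
  have hq0 : S.disc.natAbs * c.natAbs ≠ 0 :=
    mul_ne_zero (Int.natAbs_ne_zero.2 S.disc_ne_zero) (Int.natAbs_ne_zero.2 hc0)
  have hcq : c ∣ ((S.disc.natAbs * c.natAbs : ℕ) : ℤ) := by
    push_cast; exact (dvd_abs c c).2 dvd_rfl |>.mul_left _
  have hDq : (S.disc.natAbs : ℤ) ∣ ((S.disc.natAbs * c.natAbs : ℕ) : ℤ) := by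
    rw [Nat.cast_mul]; exact Dvd.intro _ rfl
  rcases Nat.even_or_odd d with he | ho
  · have hNodd : Odd S.N := by
      have hco : IsCoprime (d : ℤ) S.N := hcop.of_isCoprime_of_dvd_right hc
      rw [Nat.isCoprime_iff_coprime] at hco
      exact (Nat.coprime_two_left.1 (hco.coprime_dvd_left he.two_dvd))
    have h4 := S.disc_mod_four hn hNodd
    obtain ⟨p, hp, hp2, hdvd⟩ := exists_prime_dvd_sub hq0 hDC
    refine ⟨p, hp, hp2, hcq.trans hdvd, ?_⟩
    rw [jacobiSym_reciprocity_one_mod_four h4 (hp.odd_of_ne_two hp2),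
      jacobiSym.mod_left' (Int.ModEq.symm ((Int.modEq_iff_dvd).2 (hDq.trans hdvd)))]
    rcases eq_or_ne d 0 with rfl | hd
    · have hu : IsUnit S.disc := isCoprime_zero_left.1 (by simpa using hD)
      have h1 : S.disc = 1 := by
        rcases Int.isUnit_iff.1 hu with h | h
        · exact h
        · rw [h] at h4; norm_num at h4
      rw [h1]; simp [_root_.kronecker]
    · exact (kronecker_of_one_mod_four h4 hd).symm
  · have h4 : IsCoprime (d : ℤ) ((4 * (S.disc.natAbs * c.natAbs) : ℕ) : ℤ) := by
      rw [Nat.cast_mul]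
      refine IsCoprime.mul_right ?_ hDC
      rw [Nat.isCoprime_iff_coprime]
      exact (Nat.coprime_two_right.2 ho).pow_right 2
    obtain ⟨p, hp, hp2, hdvd⟩ := exists_prime_dvd_sub (by omega) h4
    refine ⟨p, hp, hp2, (hcq.trans ?_).trans hdvd, ?_⟩
    · rw [Nat.cast_mul 4]; exact Dvd.intro_left _ rfl
    · rw [kronecker_of_odd _ ho, jacobiSym.mod_right _ ho,
        jacobiSym.mod_right _ (hp.odd_of_ne_two hp2)]
      congr 1
      refine Nat.ModEq.symm ((Nat.modEq_iff_dvd).2 (Dvd.dvd.trans ?_ hdvd))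
      exact_mod_cast Dvd.intro c.natAbs (by ring)

theorem theta_modular_of_nonneg (hn : Even n) {l : Fin n → ℂ} {ν : ℕ}
    (hl : ν ≤ 1 ∨ l ⬝ᵥ S.A.map (Int.cast : ℤ → ℂ) *ᵥ l = 0) {m : ℕ} (hm : m ≠ 0) (u : Fin n → ℤ)
    {a b c : ℤ} {d : ℕ} (hdet : a * d - b * c = 1) (hc : (m ^ 2 * S.N : ℤ) ∣ c)
    {τ : ℂ} (hτ : 0 < τ.im) :
    S.theta l ν m u ((a * τ + b) / (c * τ + d)) =
      kronecker S.disc d * (c * τ + d) ^ (n / 2 + ν) * S.theta l ν m (a • u) τ := by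
  rcases eq_or_ne c 0 with rfl | hc0
  · obtain rfl : d = 1 := by
      have : (d : ℤ) ∣ 1 := ⟨a, by linarith⟩
      exact Nat.dvd_one.1 (by exact_mod_cast this)
    have := S.theta_transform hn hl hm u hdet hc hτ
    rw [this, gauss_one, kronecker_of_odd _ odd_one]
    simp
  · have hNc : (S.N : ℤ) ∣ c := (Dvd.intro_left _ rfl).trans hc
    obtain ⟨p, hp, hp2, hpd, hk⟩ := S.exists_prime_kronecker hn hc0 hNc (d := d)
      ⟨a, -b, by linear_combination hdet⟩
    have := theta_transform_prime hn hl hm u hdet hc hp hp2 hpd hτ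
    rwa [hk, Int.cast_natCast] at this

/-- The transformation law of the theta series under `Γ₀(m² N) ∩ Γ₁(m)`. -/
theorem theta_modular (hn : Even n) {l : Fin n → ℂ} {ν : ℕ}
    (hl : ν ≤ 1 ∨ l ⬝ᵥ S.A.map (Int.cast : ℤ → ℂ) *ᵥ l = 0) {m : ℕ} (hm : m ≠ 0) (u : Fin n → ℤ)
    {a b c d : ℤ} (hdet : a * d - b * c = 1) (hc : (m ^ 2 * S.N : ℤ) ∣ c) (ha : (m : ℤ) ∣ a - 1)
    {τ : ℂ} (hτ : 0 < τ.im) :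
    S.theta l ν m u ((a * τ + b) / (c * τ + d)) =
      kronecker S.disc d * (c * τ + d) ^ (n / 2 + ν) * S.theta l ν m u τ := by
  have hau : S.theta l ν m (a • u) τ = S.theta l ν m u τ := by
    refine S.theta_congr l ν m (fun i => ?_) τ
    rw [Pi.smul_apply, smul_eq_mul, ← sub_one_mul]
    exact ha.mul_right _
  rcases le_or_gt 0 d with hd | hd
  · obtain ⟨d, rfl⟩ := Int.eq_ofNat_of_zero_le hd
    rw [← hau, Int.cast_natCast, S.theta_modular_of_nonneg hn hl hm u hdet hc hτ]
  · obtain ⟨e, he⟩ := Int.eq_ofNat_of_zero_le (neg_nonneg.2 hd.le)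
    have key := S.theta_modular_of_nonneg hn hl hm u (a := -a) (b := -b) (c := -c) (d := e)
      (by rw [← he]; linear_combination hdet) (hc.neg_right) hτ
    have heC := congrArg (Int.cast : ℤ → ℂ) he
    push_cast at heC key
    have e1 : (-(a : ℂ) * τ + -b) / (-c * τ + e) = (a * τ + b) / (c * τ + d) := by
      rw [← heC, ← neg_div_neg_eq]; congr 1 <;> ring
    have e2 : -(c : ℂ) * τ + e = (-1) * (c * τ + d) := by rw [← heC]; ring
    rw [e1, e2, _root_.neg_smul, theta_neg, hau] at key
    rw [key, kronecker_neg hd, S.sign_disc, he, mul_pow, pow_add (-1 : ℂ)]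
    push_cast
    have : ((-1 : ℂ) ^ ν) * (-1) ^ ν = 1 := by rw [← mul_pow]; simp
    linear_combination ((kronecker S.disc e : ℂ) * (-1) ^ (n / 2) * (c * τ + d) ^ (n / 2 + ν) *
      S.theta l ν m u τ) * this

end EvenForm

section Assembly

variable {n : ℕ}

theorem two_mul_triangular {a : Fin n → Fin n → ℤ} {A : Matrix (Fin n) (Fin n) ℤ}
    (hA : ∀ i j, A i j = if i < j then a i j else if j < i then a j i else 2 * a i i)
    (x : Fin n → ℤ) :
    2 * (∑ i, ∑ j, if i ≤ j then a i j * x i * x j else 0) = x ⬝ᵥ A *ᵥ x := by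
  have h : x ⬝ᵥ A *ᵥ x = ∑ i, ∑ j, ((if i ≤ j then a i j * x i * x j else 0) +
      if j ≤ i then a j i * x j * x i else 0) := by
    simp only [dotProduct, mulVec, Finset.mul_sum]
    refine Finset.sum_congr rfl fun i _ => Finset.sum_congr rfl fun j _ => ?_
    rw [hA]
    rcases lt_trichotomy i j with h | rfl | h
    · rw [if_pos h, if_pos h.le, if_neg h.not_ge]; ring
    · simp; ring
    · rw [if_neg h.not_gt, if_pos h, if_neg h.not_ge, if_pos h.le]; ring
  rw [h]
  simp only [Finset.sum_add_distrib]
  rw [Finset.sum_comm (f := fun i j => if j ≤ i then a j i * x j * x i else 0), two_mul]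

theorem exists_two_mul_eq_form {B : Matrix (Fin n) (Fin n) ℤ} (hB : B.IsSymm)
    (hdiag : ∀ i, 2 ∣ B i i) : ∃ R : (Fin n → ℤ) → ℤ, ∀ y, 2 * R y = y ⬝ᵥ B *ᵥ y := by
  choose c hc using hdiag
  refine ⟨_, two_mul_triangular (a := fun i j => if i = j then c i else B i j) fun i j => ?_⟩
  rcases lt_trichotomy i j with h | rfl | h
  · rw [if_pos h, if_neg h.ne]
  · simpa using hc i
  · rw [if_neg h.not_gt, if_pos h, if_neg h.ne, hB.apply]

theorem formPos_of_int {A : Matrix (Fin n) (Fin n) ℤ} (hA : A.IsSymm)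
    (hpos : ∀ x : Fin n → ℤ, x ≠ 0 → 0 < x ⬝ᵥ A *ᵥ x) :
    FormPos (A.map (Int.cast : ℤ → ℝ)) := by
  set M := A.map (Int.cast : ℤ → ℝ) with hM
  have hint : ∀ z : Fin n → ℤ,
      (fun i => (z i : ℝ)) ⬝ᵥ M *ᵥ (fun i => (z i : ℝ)) = ((z ⬝ᵥ A *ᵥ z : ℤ) : ℝ) := by
    intro z; simp [hM, dotProduct, mulVec, Matrix.map_apply]
  have hrat : ∀ q : Fin n → ℚ,
      0 ≤ (fun i => (q i : ℝ)) ⬝ᵥ M *ᵥ (fun i => (q i : ℝ)) := by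
    intro q
    obtain ⟨b, hb⟩ := IsLocalization.exist_integer_multiples_of_finite (nonZeroDivisors ℤ) q
    choose z hz using hb
    have hb0 : (0 : ℝ) < ((b : ℤ) : ℝ) ^ 2 := by
      have : ((b : ℤ) : ℝ) ≠ 0 := by exact_mod_cast nonZeroDivisors.ne_zero b.2
      positivity
    have hzq : (fun i => (z i : ℝ)) = ((b : ℤ) : ℝ) • fun i => (q i : ℝ) := by
      ext i
      have := hz i
      simp only [algebraMap_int_eq, eq_intCast, zsmul_eq_mul] at this
      have := congrArg (Rat.cast : ℚ → ℝ) this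
      push_cast at this
      simpa using this
    have h0 : 0 ≤ z ⬝ᵥ A *ᵥ z := by
      rcases eq_or_ne z 0 with rfl | h
      · simp
      · exact (hpos z h).le
    have h1 := hint z
    rw [hzq, mulVec_smul, dotProduct_smul, smul_dotProduct, smul_eq_mul, smul_eq_mul,
      ← mul_assoc, ← sq] at h1
    have h2 : (0 : ℝ) ≤ ((z ⬝ᵥ A *ᵥ z : ℤ) : ℝ) := by exact_mod_cast h0
    rw [← h1] at h2
    exact nonneg_of_mul_nonneg_right h2 hb0
  have hreal : ∀ x : Fin n → ℝ, 0 ≤ x ⬝ᵥ M *ᵥ x := by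
    intro x
    have hd : DenseRange (Pi.map fun _ : Fin n => (Rat.cast : ℚ → ℝ)) :=
      DenseRange.piMap fun _ => Rat.denseRange_cast
    refine hd.induction_on (p := fun x => 0 ≤ x ⬝ᵥ M *ᵥ x) x ?_ hrat
    exact isClosed_le continuous_const (by fun_prop)
  have hherm : M.IsHermitian := by
    rw [IsHermitian, conjTranspose_eq_transpose_of_trivial, hM, ← transpose_map, hA.eq]
  have hdet : A.det ≠ 0 := by
    intro h
    obtain ⟨v, hv, hv0⟩ := exists_mulVec_eq_zero_iff.2 h
    have := hpos v hv
    rw [hv0, dotProduct_zero] at this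
    exact lt_irrefl _ this
  have hunit : IsUnit M := by
    rw [isUnit_iff_isUnit_det, isUnit_iff_ne_zero]
    have : M.det = (A.det : ℝ) := ((Int.castRingHom ℝ).map_det A).symm
    rw [this]
    exact_mod_cast hdet
  have hpd := (PosSemidef.posDef_iff_isUnit
    (PosSemidef.of_dotProduct_mulVec_nonneg hherm fun x => by simpa using hreal x)).2 hunit
  intro x hx
  simpa using hpd.dotProduct_mulVec_pos hx

theorem exists_evenForm {A : Matrix (Fin n) (Fin n) ℤ} (hA : A.IsSymm) {Q : (Fin n → ℤ) → ℤ}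
    (hQ : ∀ x, 2 * Q x = x ⬝ᵥ A *ᵥ x) (hpos : ∀ x : Fin n → ℤ, x ≠ 0 → 0 < Q x)
    {N : ℕ} (hN : 0 < N) {B : Matrix (Fin n) (Fin n) ℤ} (hdiag : ∀ i, 2 ∣ B i i)
    (hB : (N : ℚ) • (A.map (Int.cast : ℤ → ℚ))⁻¹ = B.map (Int.cast : ℤ → ℚ)) :
    ∃ S : EvenForm n, S.A = A ∧ S.Q = Q ∧ S.N = N := by
  have hpos' : FormPos (A.map (Int.cast : ℤ → ℝ)) :=
    formPos_of_int hA fun x hx => by rw [← hQ]; linarith [hpos x hx]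
  have hinj : Function.Injective fun M : Matrix (Fin n) (Fin n) ℤ => M.map (Int.cast : ℤ → ℚ) :=
    Matrix.map_injective Int.cast_injective
  have hBs : B.IsSymm := by
    apply hinj
    simp only
    rw [transpose_map, ← hB, transpose_smul, transpose_nonsing_inv, ← transpose_map, hA.eq]
  have hdet : IsUnit (A.map (Int.cast : ℤ → ℚ)).det := by
    have : (A.map (Int.cast : ℤ → ℚ)).det = (A.det : ℚ) := ((Int.castRingHom ℚ).map_det A).symm
    rw [this, isUnit_iff_ne_zero, Int.cast_ne_zero]
    intro h
    obtain ⟨v, hv, hv0⟩ := exists_mulVec_eq_zero_iff.2 h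
    have h1 := hpos v hv
    have h2 := hQ v
    rw [hv0, dotProduct_zero] at h2
    omega
  have hAB : A * B = (N : ℤ) • (1 : Matrix (Fin n) (Fin n) ℤ) := by
    apply hinj
    have h1 : (A * B).map (Int.cast : ℤ → ℚ) = A.map Int.cast * B.map Int.cast :=
      Matrix.map_mul (f := Int.castRingHom ℚ)
    simp only
    rw [h1, ← hB, mul_smul_comm, mul_nonsing_inv _ hdet]
    ext i j
    simp only [Matrix.smul_apply, Matrix.one_apply, Matrix.map_apply, smul_eq_mul]
    push_cast
    rfl
  obtain ⟨R, hR⟩ := exists_two_mul_eq_form hBs hdiag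
  exact ⟨⟨A, hA, hpos', Q, hQ, N, hN, B, hBs, hAB, R, hR⟩, rfl, rfl, rfl⟩

theorem sphericalLin_eq (S : EvenForm n) (l : Fin n → ℂ) (x : Fin n → ℤ) :
    sphericalLin S.A l x = S.lin l x := by
  simp only [sphericalLin, EvenForm.lin, dotProduct, mulVec, Finset.mul_sum, Matrix.map_apply,
    mul_assoc]

/-- In every degree a spherical function is a combination of powers of linear forms. -/
theorem IsSpherical.exists_sum (S : EvenForm n) {ν : ℕ} {P : (Fin n → ℤ) → ℂ}
    (hP : IsSpherical S.A ν P) :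
    ∃ (k : ℕ) (c : Fin k → ℂ) (l : Fin k → Fin n → ℂ),
      (∀ t, ν ≤ 1 ∨ l t ⬝ᵥ S.A.map (Int.cast : ℤ → ℂ) *ᵥ l t = 0) ∧
      P = fun x => ∑ t, c t * S.lin (l t) x ^ ν := by
  rcases hP with ⟨rfl, c, rfl⟩ | ⟨rfl, l, rfl⟩ | ⟨-, k, c, l, hl, rfl⟩
  · exact ⟨1, fun _ => c, fun _ => 0, fun _ => Or.inl zero_le_one, by ext x; simp⟩
  · exact ⟨1, fun _ => 1, fun _ => l, fun _ => Or.inl le_rfl, by ext x; simp [sphericalLin_eq]⟩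
  · refine ⟨k, c, l, fun t => Or.inr ?_, by simp only [sphericalLin_eq]⟩
    rw [← hl t]
    simp only [dotProduct, mulVec, Finset.mul_sum, Matrix.map_apply, mul_assoc]

theorem point_bijective {m : ℕ} (hm : m ≠ 0) (u : Fin n → ℤ) :
    Function.Bijective fun k : Fin n → ℤ =>
      (⟨EvenForm.point u m k, fun i => ⟨k i, by simp [EvenForm.point]⟩⟩ :
        {x : Fin n → ℤ // ∀ i, (m : ℤ) ∣ x i - u i}) := by
  constructor
  · intro k k' h
    ext i
    have := congrFun (congrArg Subtype.val h) i
    simpa [EvenForm.point, hm] using this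
  · rintro ⟨x, hx⟩
    choose k hk using id hx
    exact ⟨k, Subtype.ext (funext fun i => by simp only [EvenForm.point]; linarith [hk i])⟩

theorem tsum_spherical_eq (S : EvenForm n) {ν k : ℕ} (c : Fin k → ℂ) (l : Fin k → Fin n → ℂ)
    {m : ℕ} (hm : m ≠ 0) (u : Fin n → ℤ) (τ : ℍ) :
    ∑' x : {x : Fin n → ℤ // ∀ i, (m : ℤ) ∣ (x i - u i)}, (∑ t, c t * S.lin (l t) x ^ ν) *
        Complex.exp (2 * (Real.pi : ℂ) * Complex.I * (S.Q x : ℂ) * (τ : ℂ)) =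
      ∑ t, c t * S.theta (l t) ν m u τ := by
  rw [← (Equiv.ofBijective _ (point_bijective hm u)).tsum_eq]
  simp only [EvenForm.theta, ← tsum_mul_left]
  rw [← Summable.tsum_finsetSum fun t _ =>
    ((S.summable_norm_term hm (l t) ν u τ.im_pos).of_norm).mul_left (c t)]
  refine tsum_congr fun k => ?_
  rw [Finset.sum_mul]
  refine Finset.sum_congr rfl fun t _ => ?_
  rw [mul_assoc, EvenForm.term, expTwoPi]
  congr 3
  simp only [Equiv.ofBijective_apply]
  ring

theorem coe_smul_eq (γ : SL(2, ℤ)) (τ : ℍ) :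
    ((γ • τ : ℍ) : ℂ) = (((γ : Matrix (Fin 2) (Fin 2) ℤ) 0 0 : ℂ) * τ +
      (γ : Matrix (Fin 2) (Fin 2) ℤ) 0 1) /
      ((γ : Matrix (Fin 2) (Fin 2) ℤ) 1 0 * τ + (γ : Matrix (Fin 2) (Fin 2) ℤ) 1 1) := by
  rw [coe_specialLinearGroup_apply]
  simp

theorem det_eq_sub (γ : SL(2, ℤ)) :
    (γ : Matrix (Fin 2) (Fin 2) ℤ) 0 0 * (γ : Matrix (Fin 2) (Fin 2) ℤ) 1 1 -
      (γ : Matrix (Fin 2) (Fin 2) ℤ) 0 1 * (γ : Matrix (Fin 2) (Fin 2) ℤ) 1 0 = 1 := by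
  rw [← det_fin_two, γ.det_coe]

theorem GoodAtInfty.isBoundedAtImInfty {ν : ℕ} {F : ℂ → ℂ} (h : GoodAtInfty ν F) :
    IsBoundedAtImInfty fun τ : ℍ => F τ := by
  obtain ⟨⟨A, K, hK⟩, -⟩ := h
  exact isBoundedAtImInfty_iff.2 ⟨K, A, fun τ hτ => hK τ hτ⟩

theorem GoodAtInfty.isZeroAtImInfty {ν : ℕ} {F : ℂ → ℂ} (h : GoodAtInfty ν F) (hν : 1 ≤ ν) :
    IsZeroAtImInfty fun τ : ℍ => F τ := by
  refine (h.2 hν).comp ?_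
  rw [tendsto_comap_iff]
  exact tendsto_comap

end Assembly

/-- **Theorem 1.**  Let `Q(x) = ∑_{i ≤ j} a_{ij} x_i x_j` (`n` even) be a positive-definite
integral quadratic form with coefficient matrix `A_Q`, discriminant `D_Q`, level `N_Q`, and let
`P` be a spherical function of degree `ν` with respect to `A_Q`.  For every `m ≥ 1` and
`u ∈ ℤⁿ`, the function `f(τ) = ∑_{x ≡ u (mod m)} P(x) q^{Q(x)}` is a modular form of weight
`n/2 + ν` for `Γ₀(m²N_Q) ∩ Γ₁(m)` with nebentypus the Kronecker symbol `(D_Q/·)`; moreover it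
is a cusp form whenever `ν ≥ 1`. -/
theorem theta_with_congruence_is_modular (n : ℕ) (hn : 0 < n) (hne : Even n)
    (a : Fin n → Fin n → ℤ)
    (Q : (Fin n → ℤ) → ℤ)
    (hQ : ∀ x, Q x = ∑ i, ∑ j, if i ≤ j then a i j * x i * x j else 0)
    (A : Matrix (Fin n) (Fin n) ℤ)
    (hA : ∀ i j, A i j = if i < j then a i j else if j < i then a j i else 2 * a i i)
    (hpos : ∀ x : Fin n → ℤ, x ≠ 0 → 0 < Q x)
    (D : ℤ) (hD : D = (-1) ^ (n / 2) * A.det)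
    (NQ : ℕ)
    (hNQ : IsLeast {N : ℕ | 0 < N ∧ ∃ B : Matrix (Fin n) (Fin n) ℤ, (∀ i, 2 ∣ B i i) ∧
        (N : ℚ) • (A.map (Int.cast : ℤ → ℚ))⁻¹ = B.map (Int.cast : ℤ → ℚ)} NQ)
    (ν : ℕ) (P : (Fin n → ℤ) → ℂ) (hP : IsSpherical A ν P)
    (m : ℕ) (hm : 0 < m) (u : Fin n → ℤ)
    (f : ℍ → ℂ)
    (hf : ∀ τ : ℍ, f τ = ∑' x : {x : Fin n → ℤ // ∀ i, (m : ℤ) ∣ (x i - u i)},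
        P x * Complex.exp (2 * (Real.pi : ℂ) * Complex.I * (Q x : ℂ) * (τ : ℂ))) :
    MDifferentiable 𝓘(ℂ) 𝓘(ℂ) f ∧
    (∀ γ ∈ Gamma0 (m ^ 2 * NQ) ⊓ Gamma1 m, ∀ τ : ℍ,
        f (γ • τ) = (kronecker D ((γ : Matrix (Fin 2) (Fin 2) ℤ) 1 1) : ℂ) *
          (((γ : Matrix (Fin 2) (Fin 2) ℤ) 1 0 : ℂ) * (τ : ℂ) +
              ((γ : Matrix (Fin 2) (Fin 2) ℤ) 1 1 : ℂ)) ^ (n / 2 + ν) * f τ) ∧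
    (∀ γ : SL(2, ℤ), IsBoundedAtImInfty (fun τ : ℍ =>
        (((γ : Matrix (Fin 2) (Fin 2) ℤ) 1 0 : ℂ) * (τ : ℂ) +
            ((γ : Matrix (Fin 2) (Fin 2) ℤ) 1 1 : ℂ)) ^ (-((n / 2 + ν : ℕ) : ℤ)) *
          f (γ • τ))) ∧
    (1 ≤ ν → ∀ γ : SL(2, ℤ), IsZeroAtImInfty (fun τ : ℍ =>
        (((γ : Matrix (Fin 2) (Fin 2) ℤ) 1 0 : ℂ) * (τ : ℂ) +
            ((γ : Matrix (Fin 2) (Fin 2) ℤ) 1 1 : ℂ)) ^ (-((n / 2 + ν : ℕ) : ℤ)) *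
          f (γ • τ))) := by
  have hsymm : A.IsSymm := by
    ext i j
    rw [transpose_apply, hA, hA]
    rcases lt_trichotomy i j with h | rfl | h
    · rw [if_neg h.not_gt, if_pos h, if_pos h]
    · rfl
    · rw [if_pos h, if_neg h.not_gt, if_pos h]
  obtain ⟨hN, B, hdiag, hB⟩ := hNQ.1
  obtain ⟨S, rfl, rfl, rfl⟩ := exists_evenForm hsymm
    (fun x => by rw [hQ]; exact two_mul_triangular hA x) hpos hN hdiag hB
  obtain ⟨k, c, l, hl, rfl⟩ := IsSpherical.exists_sum S hP
  have hm0 : m ≠ 0 := hm.ne'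
  obtain rfl : D = S.disc := hD
  have hfF : ∀ τ : ℍ, f τ = ∑ t, c t * S.theta (l t) ν m u τ := fun τ => by
    rw [hf, tsum_spherical_eq S c l hm0 u τ]
  have hcusp : ∀ (γ : SL(2, ℤ)) (t : Fin k), GoodAtInfty ν fun τ : ℂ =>
      c t * ((((γ : Matrix (Fin 2) (Fin 2) ℤ) 1 0 : ℂ) * τ +
        ((γ : Matrix (Fin 2) (Fin 2) ℤ) 1 1 : ℂ)) ^ (-((n / 2 + ν : ℕ) : ℤ)) *
        S.theta (l t) ν m u ((((γ : Matrix (Fin 2) (Fin 2) ℤ) 0 0 : ℂ) * τ +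
          (γ : Matrix (Fin 2) (Fin 2) ℤ) 0 1) / ((γ : Matrix (Fin 2) (Fin 2) ℤ) 1 0 * τ +
            (γ : Matrix (Fin 2) (Fin 2) ℤ) 1 1))) := fun γ t =>
    (S.goodAtInfty_cusp hne (hl t) hm0 u (det_eq_sub γ)).const_mul (c t)
  have hslash : ∀ γ : SL(2, ℤ), (fun τ : ℍ =>
        (((γ : Matrix (Fin 2) (Fin 2) ℤ) 1 0 : ℂ) * (τ : ℂ) +
            ((γ : Matrix (Fin 2) (Fin 2) ℤ) 1 1 : ℂ)) ^ (-((n / 2 + ν : ℕ) : ℤ)) *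
          f (γ • τ)) = fun τ : ℍ => ∑ t,
      c t * ((((γ : Matrix (Fin 2) (Fin 2) ℤ) 1 0 : ℂ) * τ +
        ((γ : Matrix (Fin 2) (Fin 2) ℤ) 1 1 : ℂ)) ^ (-((n / 2 + ν : ℕ) : ℤ)) *
        S.theta (l t) ν m u ((((γ : Matrix (Fin 2) (Fin 2) ℤ) 0 0 : ℂ) * τ +
          (γ : Matrix (Fin 2) (Fin 2) ℤ) 0 1) / ((γ : Matrix (Fin 2) (Fin 2) ℤ) 1 0 * τ +
            (γ : Matrix (Fin 2) (Fin 2) ℤ) 1 1))) := fun γ => by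
    ext τ
    rw [hfF, coe_smul_eq, Finset.mul_sum]
    exact Finset.sum_congr rfl fun t _ => mul_left_comm _ _ _
  refine ⟨?_, fun γ hγ τ => ?_, fun γ => ?_, fun hν γ => ?_⟩
  · rw [UpperHalfPlane.mdifferentiable_iff]
    refine DifferentiableOn.congr (f := fun τ => ∑ t, c t * S.theta (l t) ν m u τ) ?_ ?_
    · exact DifferentiableOn.fun_sum fun t _ =>
        (S.differentiableOn_theta (l t) ν hm0 u).const_mul (c t)
    · intro τ hτ
      rw [Function.comp_apply, hfF, ofComplex_apply_of_im_pos hτ]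
  · obtain ⟨h0, h1⟩ := Subgroup.mem_inf.1 hγ
    rw [Gamma0_mem, ZMod.intCast_zmod_eq_zero_iff_dvd] at h0
    obtain ⟨ha, -, -⟩ := (Gamma1_mem m γ).1 h1
    have ha' : (m : ℤ) ∣ (γ : Matrix (Fin 2) (Fin 2) ℤ) 0 0 - 1 := by
      rw [← ZMod.intCast_zmod_eq_zero_iff_dvd]
      push_cast
      rw [ha, sub_self]
    push_cast at h0
    rw [hfF, hfF, coe_smul_eq, Finset.mul_sum]
    refine Finset.sum_congr rfl fun t _ => ?_
    rw [S.theta_modular hne (hl t) hm0 u (det_eq_sub γ) h0 ha' τ.im_pos]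
    ring
  · rw [hslash]
    exact Asymptotics.IsBigO.fun_sum fun t _ => (hcusp γ t).isBoundedAtImInfty
  · rw [hslash]
    have := tendsto_finsetSum Finset.univ fun t _ => (hcusp γ t).isZeroAtImInfty hν
    rw [Finset.sum_const_zero] at this
    exact this
end

section
/- Let n be an even positive integer and let A be an n×n positive-definite symmetric integer matrix with even diagonal entries, with discriminant D = (−1)^{n/2} det(A). Then the level of A, i.e. the smallest positive integer N such that N·A^{−1} is an integer matrix with even diagonal entries, is given by N = |D| / g, where g = gcd of the set consisting of all off-diagonal cofactors c_{ij} (i ≠ j) of A together with the halves c_{ii}/2 of the diagonal cofactors of A. -/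
open Matrix

/-- The `(i, j)` cofactor of a square matrix: `(-1)^(i+j)` times the minor obtained by
deleting row `i` and column `j`.  Equivalently, the determinant of the matrix obtained
by replacing row `i` with the standard basis vector `e_j`. -/
def cofactor {n : ℕ} (A : Matrix (Fin n) (Fin n) ℤ) (i j : Fin n) : ℤ :=
  (A.updateRow i (Pi.single j 1)).det

/-- The cofactor matrix is the transpose of the adjugate. -/
lemma cofactor_eq_adjugate {n : ℕ} (A : Matrix (Fin n) (Fin n) ℤ) (i j : Fin n) :
    cofactor A i j = A.adjugate j i := by
  rw [cofactor, adjugate_apply]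

/-- The diagonal cofactors of a skew-symmetric matrix of even size vanish. -/
lemma adjugate_diag_eq_zero_of_transpose_eq_neg {n : ℕ} (hn : 0 < n) (hne : Even n)
    (S : Matrix (Fin n) (Fin n) ℤ) (hS : Sᵀ = -S) (i : Fin n) : S.adjugate i i = 0 := by
  have hodd : Odd (n - 1) := Nat.Even.sub_odd hn hne odd_one
  have h : S.adjugateᵀ = -S.adjugate := by
    rw [adjugate_transpose, hS, ← neg_one_smul ℤ S, adjugate_smul, Fintype.card_fin,
      hodd.neg_one_pow, neg_one_smul]
  have hi := congrFun (congrFun h i) i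
  simp only [transpose_apply, neg_apply] at hi
  omega

/-- The diagonal cofactors of an even symmetric matrix of even size are even: such a matrix is
congruent modulo `2` to a skew-symmetric one. -/
lemma two_dvd_adjugate_diag {n : ℕ} (hn : 0 < n) (hne : Even n)
    (A : Matrix (Fin n) (Fin n) ℤ) (hsymm : A.IsSymm) (heven : ∀ i, 2 ∣ A i i) (i : Fin n) :
    2 ∣ A.adjugate i i := by
  let S : Matrix (Fin n) (Fin n) ℤ :=
    of fun i j => if i < j then A i j else if j < i then -A i j else 0
  have hS : Sᵀ = -S := by
    ext a b
    simp only [S, transpose_apply, neg_apply, of_apply, hsymm.apply a b]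
    rcases lt_trichotomy a b with h | h | h
    · simp [h, h.not_gt]
    · simp [h]
    · simp [h, h.not_gt]
  have hmod : (Int.castRingHom (ZMod 2)).mapMatrix A = (Int.castRingHom (ZMod 2)).mapMatrix S := by
    ext a b
    simp only [S, RingHom.mapMatrix_apply, map_apply, of_apply, Int.coe_castRingHom]
    rcases lt_trichotomy a b with h | h | h
    · simp [h]
    · subst h
      simpa using (ZMod.intCast_zmod_eq_zero_iff_dvd (A a a) 2).2 (heven a)
    · simp [h, h.not_gt, ZMod.neg_eq_self_mod_two]
  have hadj : ((A.adjugate i i : ℤ) : ZMod 2) = (S.adjugate i i : ℤ) := by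
    have h := congrArg adjugate hmod
    rw [← RingHom.map_adjugate, ← RingHom.map_adjugate] at h
    exact congrFun (congrFun h i) i
  rw [adjugate_diag_eq_zero_of_transpose_eq_neg hn hne S hS i, Int.cast_zero] at hadj
  exact (ZMod.intCast_zmod_eq_zero_iff_dvd _ 2).1 hadj

/-- A positive-definite integer matrix has nonzero determinant. -/
lemma det_ne_zero_of_dotProduct_mulVec_pos {n : ℕ} (A : Matrix (Fin n) (Fin n) ℤ)
    (hpos : ∀ x : Fin n → ℤ, x ≠ 0 → 0 < x ⬝ᵥ A.mulVec x) : A.det ≠ 0 := by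
  intro h
  obtain ⟨x, hx, hAx⟩ := exists_mulVec_eq_zero_iff.2 h
  simpa [hAx] using hpos x hx

/-- Clearing denominators in `N • A⁻¹ = B`. -/
lemma smul_inv_map_eq_iff {n : ℕ} (A B : Matrix (Fin n) (Fin n) ℤ) (hdet : A.det ≠ 0) (N : ℤ) :
    (N : ℚ) • (A.map (Int.cast : ℤ → ℚ))⁻¹ = B.map (Int.cast : ℤ → ℚ) ↔
      ∀ i j, N * A.adjugate i j = A.det * B i j := by
  have hdetQ : (A.det : ℚ) ≠ 0 := Int.cast_ne_zero.2 hdet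
  have hd : (A.map (Int.cast : ℤ → ℚ)).det = A.det :=
    ((Int.castRingHom ℚ).map_det A).symm
  have ha : (A.map (Int.cast : ℤ → ℚ)).adjugate = A.adjugate.map (Int.cast : ℤ → ℚ) :=
    ((Int.castRingHom ℚ).map_adjugate A).symm
  rw [inv_def, hd, ha, Ring.inverse_eq_inv', ← Matrix.ext_iff]
  refine forall₂_congr fun i j => ?_
  simp only [Matrix.smul_apply, map_apply, smul_eq_mul]
  rw [← @Int.cast_inj ℚ, Int.cast_mul, Int.cast_mul]
  constructor
  · intro h
    rw [← h]
    field_simp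
  · intro h
    field_simp
    linarith

/-- **Level of an even positive-definite matrix** (Proposition 1 / Statement 2).
Let `n` be an even positive integer and `A` an `n × n` positive-definite symmetric integer
matrix with even diagonal.  With `D = (-1)^(n/2) det A` and `g` the gcd of all off-diagonal
cofactors together with the halves of the diagonal cofactors, the smallest positive integer
`N` such that `N • A⁻¹` is an integer matrix with even diagonal is `N = |D| / g`. -/
theorem level_eq_discriminant_div_gcd_cofactors (n : ℕ) (hn : 0 < n) (hne : Even n)
    (A : Matrix (Fin n) (Fin n) ℤ) (hsymm : A.IsSymm) (heven : ∀ i, 2 ∣ A i i)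
    (hpos : ∀ x : Fin n → ℤ, x ≠ 0 → 0 < x ⬝ᵥ A.mulVec x)
    (D : ℤ) (hD : D = (-1) ^ (n / 2) * A.det)
    (g : ℤ)
    (hg : g = Finset.gcd Finset.univ (fun p : Fin n × Fin n =>
        if p.1 = p.2 then cofactor A p.1 p.1 / 2 else cofactor A p.1 p.2)) :
    IsLeast {N : ℤ | 0 < N ∧ ∃ B : Matrix (Fin n) (Fin n) ℤ, (∀ i, 2 ∣ B i i) ∧
        (N : ℚ) • (A.map (Int.cast : ℤ → ℚ))⁻¹ = B.map (Int.cast : ℤ → ℚ)}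
      (|D| / g) := by
  have hdet := det_ne_zero_of_dotProduct_mulVec_pos A hpos
  have hdiag := two_dvd_adjugate_diag hn hne A hsymm heven
  have habs : |D| = |A.det| := by rw [hD, abs_mul, abs_pow, abs_neg, abs_one, one_pow, one_mul]
  have hg_diag (i : Fin n) : g ∣ A.adjugate i i / 2 := by
    have h := Finset.gcd_dvd (f := fun p : Fin n × Fin n =>
      if p.1 = p.2 then cofactor A p.1 p.1 / 2 else cofactor A p.1 p.2) (Finset.mem_univ (i, i))
    rw [← hg] at h
    simpa [cofactor_eq_adjugate] using h
  have hg_adj (i j : Fin n) : g ∣ A.adjugate i j := by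
    by_cases hij : i = j
    · subst hij
      exact (hg_diag i).trans (Int.ediv_dvd_of_dvd (hdiag i))
    · have h := Finset.gcd_dvd (f := fun p : Fin n × Fin n =>
        if p.1 = p.2 then cofactor A p.1 p.1 / 2 else cofactor A p.1 p.2) (Finset.mem_univ (j, i))
      rw [← hg] at h
      simpa [cofactor_eq_adjugate, Ne.symm hij] using h
  have hg_det : g ∣ A.det := by
    have h := congrFun (congrFun (mul_adjugate A) ⟨0, hn⟩) ⟨0, hn⟩
    rw [mul_apply] at h
    simp only [Matrix.smul_apply, one_apply_eq, smul_eq_mul, mul_one] at h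
    rw [← h]
    exact Finset.dvd_sum fun k _ => (hg_adj _ _).mul_left _
  have hg_pos : 0 < g := by
    refine lt_of_le_of_ne ?_ fun h => hdet (zero_dvd_iff.1 (h ▸ hg_det))
    rw [hg, ← Finset.normalize_gcd]
    exact Int.nonneg_of_normalize_eq_self (normalize_idem _)
  have hmul : |A.det| / g * g = |A.det| := Int.ediv_mul_cancel ((dvd_abs _ _).2 hg_det)
  rw [habs]
  constructor
  · refine ⟨Int.ediv_pos_of_pos_of_dvd (abs_pos.2 hdet) hg_pos.le ((dvd_abs _ _).2 hg_det),
      of fun i j => A.det.sign * (A.adjugate i j / g), fun i => ?_,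
      (smul_inv_map_eq_iff A _ hdet _).2 fun i j => ?_⟩
    · refine Dvd.dvd.mul_left ?_ _
      obtain ⟨k, hk⟩ := hg_diag i
      have h2 := Int.mul_ediv_cancel' (hdiag i)
      refine ⟨k, Int.ediv_eq_of_eq_mul_right hg_pos.ne' ?_⟩
      rw [← h2, hk]
      ring
    · obtain ⟨k, hk⟩ := hg_adj i j
      rw [of_apply, hk, Int.mul_ediv_cancel_left _ hg_pos.ne', ← mul_assoc, hmul, ← mul_assoc,
        Int.mul_sign_self, Int.abs_eq_natAbs]
  · rintro N ⟨hN, B, hB, hinv⟩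
    rw [smul_inv_map_eq_iff A B hdet] at hinv
    have hdvd : A.det ∣ N * g := by
      have hN_norm : N * g = Finset.univ.gcd fun p : Fin n × Fin n =>
          N * if p.1 = p.2 then cofactor A p.1 p.1 / 2 else cofactor A p.1 p.2 := by
        rw [Finset.gcd_mul_left, Int.normalize_of_nonneg hN.le, hg]
      rw [hN_norm]
      refine Finset.dvd_gcd fun p _ => ?_
      split_ifs with hp
      · obtain ⟨k, hk⟩ := hB p.1
        refine ⟨k, mul_left_cancel₀ (two_ne_zero (α := ℤ)) ?_⟩
        have h2 := Int.mul_ediv_cancel' (hdiag p.1)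
        have h := hinv p.1 p.1
        rw [hk] at h
        rw [cofactor_eq_adjugate]
        linear_combination h + N * h2
      · exact ⟨B p.2 p.1, by rw [cofactor_eq_adjugate, hinv]⟩
    have hle : |A.det| ≤ N * g := Int.le_of_dvd (mul_pos hN hg_pos) ((abs_dvd _ _).2 hdvd)
    rw [← hmul] at hle
    exact le_of_mul_le_mul_right hle hg_pos
end
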